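/- For every finite-volume non-compact right-angled convex hyperbolic 5-polyhedron P, one has ν(P) = a₄(P) + v_∞(P) ≥ 26; in particular ν₅ ≥ 26. -/

import Mathlib

open scoped BigOperators

noncomputable section

/-- The Minkowski bilinear form `⟨x,y⟩ = -x₀y₀ + x₁y₁ + ⋯ + xₙyₙ` on `ℝ^{n+1}`. -/
def mink {n : ℕ} (x y : Fin (n + 1) → ℝ) : ℝ :=
  -(x 0 * y 0) + ∑ i : Fin n, x i.succ * y i.succ

/-- The hyperboloid model of the hyperbolic space `ℍⁿ`. -/
def Hyperboloid (n : ℕ) : Set (Fin (n + 1) → ℝ) :=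
  {x | mink x x = -1 ∧ 0 < x 0}

/-- The Klein projection `x ↦ (x₁/x₀, …, xₙ/x₀)` of the hyperboloid onto the unit ball. -/
def kleinMap {n : ℕ} (x : Fin (n + 1) → ℝ) : EuclideanSpace ℝ (Fin n) :=
  WithLp.toLp 2 fun i => x i.succ / x 0

/-- Dimension of a subset of a real vector space: the rank of its vector span. -/
def sdim {n : ℕ} (s : Set (EuclideanSpace ℝ (Fin n))) : ℕ :=
  Module.finrank ℝ (vectorSpan ℝ s)

/-- A convex hyperbolic `n`-polyhedron: a finite intersection of hyperbolic half-spaces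
`H_{eᵢ}⁻ = {x : ⟨eᵢ,x⟩ ≤ 0}` (with `⟨eᵢ,eᵢ⟩ = 1`) having nonempty interior
(equivalently, its Klein-model image has nonempty interior in `ℝⁿ`). -/
structure HypPolyhedron (n : ℕ) where
  m : ℕ
  e : Fin m → (Fin (n + 1) → ℝ)
  unit : ∀ i, mink (e i) (e i) = 1
  nonempty_int :
    (interior (kleinMap '' {x ∈ Hyperboloid n | ∀ i, mink (e i) x ≤ 0})).Nonempty

namespace HypPolyhedron

variable {n : ℕ} (P : HypPolyhedron n)

/-- The set of points of the polyhedron in the hyperboloid model. -/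
def carrier : Set (Fin (n + 1) → ℝ) :=
  {x ∈ Hyperboloid n | ∀ i, mink (P.e i) x ≤ 0}

/-- `P̄`: the closure of the Klein-model image of the polyhedron in the closed unit ball. -/
def cl : Set (EuclideanSpace ℝ (Fin n)) :=
  closure (kleinMap '' P.carrier)

/-- The `k`-faces of `P`: the `k`-dimensional (nonempty) exposed faces of `P̄`. -/
def faces (k : ℕ) : Set (Set (EuclideanSpace ℝ (Fin n))) :=
  {F | IsExposed ℝ P.cl F ∧ F.Nonempty ∧ sdim F = k}

/-- `a_k(P)`: the number of `k`-faces of `P`. -/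
def a (k : ℕ) : ℕ := (P.faces k).ncard

/-- Vertices of `P`: the points of `0`-dimensional exposed faces of `P̄`. -/
def verts : Set (EuclideanSpace ℝ (Fin n)) :=
  {v | IsExposed ℝ P.cl {v}}

/-- Ideal vertices: vertices lying on the unit sphere. -/
def idealVerts : Set (EuclideanSpace ℝ (Fin n)) :=
  {v ∈ P.verts | ‖v‖ = 1}

/-- Finite vertices: vertices lying in the open unit ball. -/
def finiteVerts : Set (EuclideanSpace ℝ (Fin n)) :=
  {v ∈ P.verts | ‖v‖ < 1}

/-- `v_∞(P)`: the number of ideal vertices of `P`. -/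
def vInf : ℕ := P.idealVerts.ncard

/-- The bounding hyperplane `H_e` contains the face `F`. -/
def faceInHyperplane (e : Fin (n + 1) → ℝ) (F : Set (EuclideanSpace ℝ (Fin n))) : Prop :=
  ∀ x ∈ P.carrier, kleinMap x ∈ F → mink e x = 0

/-- `P` is right-angled: whenever two distinct bounding hyperplanes both contain an
`(n-2)`-dimensional face of `P`, the corresponding unit normals are orthogonal,
i.e. the dihedral angle is `π/2`. -/
def IsRightAngled : Prop :=
  ∀ i j : Fin P.m, i ≠ j →
    (∃ F ∈ P.faces (n - 2), P.faceInHyperplane (P.e i) F ∧ P.faceInHyperplane (P.e j) F) →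
    mink (P.e i) (P.e j) = 0

/-- `P` has finite volume: `P̄` is the convex hull of its (finitely many) vertices. -/
def FiniteVolume : Prop :=
  P.verts.Finite ∧ P.cl = convexHull ℝ P.verts

/-- `P` is compact: finite volume and all vertices are finite. -/
def IsCompactPoly : Prop :=
  P.FiniteVolume ∧ ∀ v ∈ P.verts, ‖v‖ < 1

/-- `P` is ideal: finite volume and all vertices are ideal. -/
def IsIdeal : Prop :=
  P.FiniteVolume ∧ ∀ v ∈ P.verts, ‖v‖ = 1

end HypPolyhedron

/-- `ν(P) = a_{n-1}(P) + v_∞(P)` ranging over the family `𝒫ⁿ` of finite-volume non-compact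
right-angled convex hyperbolic `n`-polyhedra. -/
def nuSet (n : ℕ) : Set ℕ :=
  {m | ∃ P : HypPolyhedron n,
        P.FiniteVolume ∧ P.IsRightAngled ∧ ¬ P.IsCompactPoly ∧ P.a (n - 1) + P.vInf = m}

/-- `νₙ = sInf {ν(P) : P ∈ 𝒫ⁿ}` (with `sInf ∅ = 0`). -/
def nu (n : ℕ) : ℕ := sInf (nuSet n)

/-!
Redundant walls may be dropped. The normals of two walls of an irredundant right-angled polyhedron
are then orthogonal or have product at most `-1`, so that walls meeting in `ℍⁿ` are orthogonal.

Let `v` be an ideal vertex. Finite volume makes the section of `P` by a horosphere at `v` bounded,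
and a bounded right-angled Euclidean polytope is a box: `2 * (n - 1)` walls pass through `v`. In the
half-space model with `v` at infinity, look at the boundary points over the `2 ^ (n - 1)` corners
and over the centre of the box. Each is an ideal vertex of `P` or is cut off by a wall not passing
through `v`, which is a hemisphere. A hemisphere cutting off a corner is orthogonal to the walls
through it, hence centred there, and disjoint from or tangent to the opposite ones. Thus its radius
is at most every edge length, hence at most half the diagonal of a box of dimension at least four.
So no wall cuts off two of these points, and `ν(P) ≥ (2 ^ (n - 1) + 1) + 1 + 2 * (n - 1)`, the
summand `1` standing for `v`.
-/

/-! ### Minkowski space -/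

section Minkowski

variable {n : ℕ} {x y z : Fin (n + 1) → ℝ} {v : EuclideanSpace ℝ (Fin n)}

/-- The Minkowski form as a bilinear form. -/
def minkForm (n : ℕ) : LinearMap.BilinForm ℝ (Fin (n + 1) → ℝ) :=
  LinearMap.mk₂ ℝ mink
    (fun x y z => by simp only [mink, Pi.add_apply, add_mul, Finset.sum_add_distrib]; ring)
    (fun c x y => by
      simp only [mink, Pi.smul_apply, smul_eq_mul, mul_add, Finset.mul_sum, mul_assoc, mul_neg])
    (fun x y z => by simp only [mink, Pi.add_apply, mul_add, Finset.sum_add_distrib]; ring)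
    (fun c x y => by
      simp only [mink, Pi.smul_apply, smul_eq_mul, mul_add, Finset.mul_sum, mul_left_comm, mul_neg])

/-- The spatial part `(x₁, …, xₙ)` of a vector of Minkowski space. -/
def spat (n : ℕ) : (Fin (n + 1) → ℝ) →ₗ[ℝ] EuclideanSpace ℝ (Fin n) :=
  (WithLp.linearEquiv 2 ℝ (Fin n → ℝ)).symm.toLinearMap ∘ₗ LinearMap.funLeft ℝ ℝ Fin.succ

/-- The vector of Minkowski space at height one over a point of the Klein model. -/
def kleinLift (y : EuclideanSpace ℝ (Fin n)) : Fin (n + 1) → ℝ :=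
  Fin.cons 1 y

/-- The open forward light cone. -/
def forwardCone (n : ℕ) : Set (Fin (n + 1) → ℝ) :=
  {x | mink x x < 0 ∧ 0 < x 0}

lemma mink_comm (x y : Fin (n + 1) → ℝ) : mink x y = mink y x := by
  simp only [mink, mul_comm]

lemma mink_add_left (x y z : Fin (n + 1) → ℝ) : mink (x + y) z = mink x z + mink y z :=
  (minkForm n).map_add₂ x y z

lemma mink_add_right (x y z : Fin (n + 1) → ℝ) : mink x (y + z) = mink x y + mink x z :=
  map_add (minkForm n x) y z

lemma mink_sub_left (x y z : Fin (n + 1) → ℝ) : mink (x - y) z = mink x z - mink y z :=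
  (minkForm n).map_sub₂ x y z

lemma mink_sub_right (x y z : Fin (n + 1) → ℝ) : mink x (y - z) = mink x y - mink x z :=
  map_sub (minkForm n x) y z

lemma mink_smul_left (c : ℝ) (x y : Fin (n + 1) → ℝ) : mink (c • x) y = c * mink x y :=
  (minkForm n).map_smul₂ c x y

lemma mink_smul_right (c : ℝ) (x y : Fin (n + 1) → ℝ) : mink x (c • y) = c * mink x y :=
  map_smul (minkForm n x) c y

lemma mink_sum_right {ι : Type*} (s : Finset ι) (x : Fin (n + 1) → ℝ) (y : ι → Fin (n + 1) → ℝ) :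
    mink x (∑ i ∈ s, y i) = ∑ i ∈ s, mink x (y i) :=
  map_sum (minkForm n x) y s

lemma continuous_mink (x : Fin (n + 1) → ℝ) : Continuous (mink x) := by
  unfold mink; fun_prop

lemma continuous_mink_self : Continuous fun x : Fin (n + 1) → ℝ => mink x x := by
  unfold mink; fun_prop

lemma mink_eq_inner (x y : Fin (n + 1) → ℝ) :
    mink x y = -(x 0 * y 0) + inner ℝ (spat n x) (spat n y) := by
  simp [mink, spat, PiLp.inner_apply, LinearMap.funLeft_apply, mul_comm]

lemma mink_self (x : Fin (n + 1) → ℝ) : mink x x = ‖spat n x‖ ^ 2 - x 0 ^ 2 := by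
  rw [mink_eq_inner, real_inner_self_eq_norm_sq]; ring

lemma eq_of_spat_eq (h0 : x 0 = y 0) (h : spat n x = spat n y) : x = y :=
  funext (Fin.cases h0 fun i => congrArg (fun u : EuclideanSpace ℝ (Fin n) => u i) h)

lemma isOpen_forwardCone : IsOpen (forwardCone n) :=
  (isOpen_lt continuous_mink_self continuous_const).inter
    (isOpen_lt continuous_const (continuous_apply 0))

lemma norm_spat_le_abs (hx : mink x x ≤ 0) : ‖spat n x‖ ≤ |x 0| :=
  abs_norm (spat n x) ▸ sq_le_sq.1 (by linarith [mink_self x])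

lemma mem_forwardCone_iff : x ∈ forwardCone n ↔ ‖spat n x‖ < x 0 := by
  rw [forwardCone, Set.mem_ofPred_eq, mink_self, sub_neg]
  refine ⟨fun h => lt_of_pow_lt_pow_left₀ 2 h.2.le h.1, fun h => ⟨?_, (norm_nonneg _).trans_lt h⟩⟩
  exact pow_lt_pow_left₀ h (norm_nonneg _) two_ne_zero

lemma convex_forwardCone : Convex ℝ (forwardCone n) := by
  intro x hx y hy a b ha hb hab
  rw [mem_forwardCone_iff] at *
  have key : 0 < a * (x 0 - ‖spat n x‖) + b * (y 0 - ‖spat n y‖) := by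
    rcases ha.eq_or_lt with rfl | ha
    · rw [zero_add] at hab; subst hab; linarith
    · exact add_pos_of_pos_of_nonneg (mul_pos ha (by linarith)) (mul_nonneg hb (by linarith))
  calc ‖spat n (a • x + b • y)‖ ≤ a * ‖spat n x‖ + b * ‖spat n y‖ := by
        rw [map_add, map_smul, map_smul]
        exact (norm_add_le _ _).trans_eq (by rw [norm_smul_of_nonneg ha, norm_smul_of_nonneg hb])
    _ < a * x 0 + b * y 0 := by linarith

lemma smul_mem_forwardCone {c : ℝ} (hc : 0 < c) (hx : x ∈ forwardCone n) :
    c • x ∈ forwardCone n := by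
  refine ⟨?_, mul_pos hc hx.2⟩
  rw [mink_smul_left, mink_smul_right]
  exact mul_neg_of_pos_of_neg hc (mul_neg_of_pos_of_neg hc hx.1)

lemma zero_coord_pos_of_mink_neg (hx : mink x x ≤ 0) (hy : mink y y ≤ 0) (hy0 : 0 ≤ y 0)
    (hxy : mink x y < 0) : 0 < x 0 := by
  by_contra! hx0
  have hinner := neg_le_of_abs_le (abs_real_inner_le_norm (spat n x) (spat n y))
  have hprod := mul_le_mul (norm_spat_le_abs hx) (norm_spat_le_abs hy) (norm_nonneg _)
    (abs_nonneg _)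
  rw [abs_of_nonpos hx0, abs_of_nonneg hy0] at hprod
  linarith [mink_eq_inner x y]

lemma mem_forwardCone_of_mink_neg (hx : mink x x < 0) (hy : y ∈ forwardCone n)
    (hxy : mink x y < 0) : x ∈ forwardCone n :=
  ⟨hx, zero_coord_pos_of_mink_neg hx.le hy.1.le hy.2.le hxy⟩

lemma mink_self_pos_of_orthogonal (hz : z ∈ forwardCone n) (h : mink x z = 0) (hx : x ≠ 0) :
    0 < mink x x := by
  by_contra! hle
  have hz' := mem_forwardCone_iff.1 hz
  have hbound : |x 0| * z 0 ≤ |x 0| * ‖spat n z‖ := calc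
    |x 0| * z 0 = |inner ℝ (spat n x) (spat n z)| := by
      rw [← abs_of_pos hz.2, ← abs_mul]; congr 1; linarith [mink_eq_inner x z]
    _ ≤ ‖spat n x‖ * ‖spat n z‖ := abs_real_inner_le_norm _ _
    _ ≤ |x 0| * ‖spat n z‖ := mul_le_mul_of_nonneg_right (norm_spat_le_abs hle) (norm_nonneg _)
  have hx0 : x 0 = 0 := abs_nonpos_iff.1 (by nlinarith)
  have hspat : ‖spat n x‖ ≤ 0 := by simpa [hx0] using norm_spat_le_abs hle
  exact hx (eq_of_spat_eq hx0 (by rw [norm_le_zero_iff.1 hspat, map_zero]))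

@[simp] lemma kleinLift_zero_coord (y : EuclideanSpace ℝ (Fin n)) : kleinLift y 0 = 1 := rfl

@[simp] lemma spat_kleinLift (y : EuclideanSpace ℝ (Fin n)) : spat n (kleinLift y) = y := rfl

@[simp] lemma kleinMap_kleinLift (y : EuclideanSpace ℝ (Fin n)) : kleinMap (kleinLift y) = y := by
  ext i; simp [kleinMap, kleinLift]

lemma mink_kleinLift (x : Fin (n + 1) → ℝ) (y : EuclideanSpace ℝ (Fin n)) :
    mink x (kleinLift y) = inner ℝ (spat n x) y - x 0 := by
  rw [mink_eq_inner, spat_kleinLift, kleinLift_zero_coord]; ring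

lemma mink_kleinLift_self (y : EuclideanSpace ℝ (Fin n)) :
    mink (kleinLift y) (kleinLift y) = ‖y‖ ^ 2 - 1 := by
  rw [mink_self, spat_kleinLift, kleinLift_zero_coord, one_pow]

lemma mink_kleinLift_self_eq_zero (hv : ‖v‖ = 1) : mink (kleinLift v) (kleinLift v) = 0 := by
  rw [mink_kleinLift_self, hv]; norm_num

lemma kleinLift_mem_forwardCone_iff : kleinLift v ∈ forwardCone n ↔ ‖v‖ < 1 := by
  rw [mem_forwardCone_iff, spat_kleinLift, kleinLift_zero_coord]

lemma mink_kleinLift_neg (hz : z ∈ forwardCone n) (hv : ‖v‖ ≤ 1) : mink z (kleinLift v) < 0 := by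
  have := mul_le_mul_of_nonneg_left hv (norm_nonneg (spat n z))
  linarith [mink_kleinLift z v, real_inner_le_norm (spat n z) v, mem_forwardCone_iff.1 hz]

lemma continuous_kleinLift :
    Continuous (kleinLift : EuclideanSpace ℝ (Fin n) → Fin (n + 1) → ℝ) :=
  continuous_pi (Fin.cases continuous_const fun i => by unfold kleinLift; fun_prop)

lemma smul_kleinLift_kleinMap (hx : x 0 ≠ 0) : x 0 • kleinLift (kleinMap x) = x :=
  funext (Fin.cases (by simp) fun i => by simp [kleinLift, kleinMap]; field_simp)

lemma mink_kleinLift_kleinMap (x : Fin (n + 1) → ℝ) (hy : y 0 ≠ 0) :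
    mink x y = y 0 * mink x (kleinLift (kleinMap y)) := by
  rw [← mink_smul_right, smul_kleinLift_kleinMap hy]

lemma kleinMap_smul {c : ℝ} (hc : c ≠ 0) (x : Fin (n + 1) → ℝ) :
    kleinMap (c • x) = kleinMap x := by
  ext i; simp [kleinMap, mul_div_mul_left _ _ hc]

lemma norm_kleinMap_eq_one (hx : mink x x = 0) (hx0 : x 0 ≠ 0) : ‖kleinMap x‖ = 1 := by
  have h := mink_kleinLift_self (kleinMap x)
  rw [← smul_kleinLift_kleinMap hx0, mink_smul_left, mink_smul_right, ← mul_assoc,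
    mul_eq_zero_iff_left (mul_ne_zero hx0 hx0), h, sub_eq_zero] at hx
  exact (pow_eq_one_iff_of_nonneg (norm_nonneg _) two_ne_zero).1 hx

lemma mink_self_eq_norm_sq (hv : ‖v‖ = 1) (h : mink x (kleinLift v) = 0) :
    mink x x = ‖spat n x - x 0 • v‖ ^ 2 := by
  rw [mink_kleinLift, sub_eq_zero] at h
  rw [mink_self, norm_sub_sq_real, inner_smul_right, h, norm_smul, hv, mul_one, Real.norm_eq_abs,
    sq_abs]
  ring

lemma mink_self_nonneg_of_orthogonal_null (hv : ‖v‖ = 1) (h : mink x (kleinLift v) = 0) :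
    0 ≤ mink x x :=
  mink_self_eq_norm_sq hv h ▸ sq_nonneg _

lemma eq_smul_kleinLift_of_orthogonal_null (hv : ‖v‖ = 1) (h : mink x (kleinLift v) = 0)
    (hx : mink x x = 0) : x = x 0 • kleinLift v := by
  rw [mink_self_eq_norm_sq hv h, sq_eq_zero_iff, norm_eq_zero, sub_eq_zero] at hx
  exact eq_of_spat_eq (by simp) (by rw [hx, map_smul, spat_kleinLift])

end Minkowski

section Projection

variable {n : ℕ} {e x y : Fin (n + 1) → ℝ}

/-- The orthogonal projection along `e`, onto the orthogonal complement of `e`; the identity when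
`e` is null. -/
def minkProj (e x : Fin (n + 1) → ℝ) : Fin (n + 1) → ℝ := x - (mink e x / mink e e) • e

lemma mink_minkProj (y e x : Fin (n + 1) → ℝ) :
    mink y (minkProj e x) = mink y x - mink e x / mink e e * mink y e := by
  rw [minkProj, mink_sub_right, mink_smul_right]

lemma mink_minkProj_self (he : mink e e ≠ 0) (x : Fin (n + 1) → ℝ) :
    mink e (minkProj e x) = 0 := by
  rw [mink_minkProj, div_mul_cancel₀ _ he, sub_self]

lemma mink_minkProj_of_orthogonal (h : mink y e = 0) (x : Fin (n + 1) → ℝ) :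
    mink y (minkProj e x) = mink y x := by
  rw [mink_minkProj, h, mul_zero, sub_zero]

lemma minkProj_mem_forwardCone (he : 0 < mink e e) (hx : x ∈ forwardCone n) :
    minkProj e x ∈ forwardCone n := by
  have hpx : mink (minkProj e x) x ≤ mink x x := by
    rw [mink_comm, mink_minkProj, mink_comm x e, div_mul_eq_mul_div]
    exact sub_le_self _ (div_nonneg (mul_self_nonneg _) he.le)
  refine mem_forwardCone_of_mink_neg ?_ hx (hpx.trans_lt hx.1)
  calc mink (minkProj e x) (minkProj e x) = mink (minkProj e x) x :=
        mink_minkProj_of_orthogonal (by rw [mink_comm, mink_minkProj_self he.ne']) x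
    _ < 0 := hpx.trans_lt hx.1

end Projection

section PuncturedBoundary

variable {n : ℕ} {x y : Fin (n + 1) → ℝ} {v : EuclideanSpace ℝ (Fin n)}

/-- The ideal boundary of hyperbolic space without the ideal point `v`, each boundary point being
represented by the null vector whose pairing with `kleinLift v` is `-1`. -/
def puncturedBoundary (v : EuclideanSpace ℝ (Fin n)) : Set (Fin (n + 1) → ℝ) :=
  {x | mink x x = 0 ∧ mink x (kleinLift v) = -1}

lemma zero_coord_pos_of_mem_puncturedBoundary (hv : ‖v‖ = 1) (hx : x ∈ puncturedBoundary v) :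
    0 < x 0 :=
  zero_coord_pos_of_mink_neg hx.1.le (mink_kleinLift_self_eq_zero hv).le zero_le_one
    (hx.2 ▸ neg_one_lt_zero)

lemma injOn_kleinMap_puncturedBoundary (hv : ‖v‖ = 1) :
    Set.InjOn (kleinMap (n := n)) (puncturedBoundary v) := by
  intro x hx y hy hxy
  have hx0 := (zero_coord_pos_of_mem_puncturedBoundary hv hx).ne'
  have hy0 := (zero_coord_pos_of_mem_puncturedBoundary hv hy).ne'
  have hx' := mink_kleinLift_kleinMap (kleinLift v) hx0
  have hy' := mink_kleinLift_kleinMap (kleinLift v) hy0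
  rw [mink_comm, hx.2, hxy] at hx'
  rw [mink_comm, hy.2] at hy'
  have hpair : mink (kleinLift v) (kleinLift (kleinMap y)) ≠ 0 := fun h => by simp [h] at hx'
  have h0 : x 0 = y 0 := mul_right_cancel₀ hpair (hx'.symm.trans hy')
  rw [← smul_kleinLift_kleinMap hx0, ← smul_kleinLift_kleinMap hy0, hxy, h0]

lemma kleinMap_ne_of_mem_puncturedBoundary (hv : ‖v‖ = 1) (hx : x ∈ puncturedBoundary v) :
    kleinMap x ≠ v := by
  rintro rfl
  have h := mink_kleinLift_kleinMap (kleinLift (kleinMap x))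
    (zero_coord_pos_of_mem_puncturedBoundary hv hx).ne'
  rw [mink_comm, hx.2, mink_kleinLift_self_eq_zero hv] at h
  norm_num at h

/-- Orthonormal spacelike vectors orthogonal to `kleinLift v` are Euclidean coordinates on the
horosphere at `v`, hence on the punctured boundary. -/
lemma exists_mem_puncturedBoundary {ι : Type*} [Finite ι] [DecidableEq ι]
    {e : ι → Fin (n + 1) → ℝ} (he : ∀ i j, mink (e i) (e j) = if i = j then 1 else 0)
    (hev : ∀ i, mink (e i) (kleinLift v) = 0) (hv : ‖v‖ = 1) (Y : ι → ℝ) :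
    ∃ x ∈ puncturedBoundary v, ∀ i, mink (e i) x = Y i := by
  cases nonempty_fintype ι
  set o : Fin (n + 1) → ℝ := kleinLift 0
  set y : Fin (n + 1) → ℝ := o + ∑ i, (Y i - mink (e i) o) • e i with hy
  set x : Fin (n + 1) → ℝ := y + (mink y y / 2) • kleinLift v with hx
  have hyv : mink (kleinLift v) y = -1 := by
    simp [hy, o, mink_add_right, mink_sum_right, mink_smul_right, mink_comm _ (e _), hev,
      mink_kleinLift]
  have hvv := mink_kleinLift_self_eq_zero hv
  refine ⟨x, ⟨?_, ?_⟩, fun i => ?_⟩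
  · simp only [hx, mink_add_left, mink_add_right _ y, mink_smul_left, mink_smul_right, hvv, hyv,
      mink_comm y (kleinLift v)]
    ring
  · rw [mink_comm, hx, mink_add_right, mink_smul_right, hvv, hyv]; ring
  · simp [hx, hy, mink_add_right, mink_sum_right, mink_smul_right, he, hev]

end PuncturedBoundary

section Convexity

lemma exists_irredundant {V ι : Type*} [AddCommGroup V] [Module ℝ V] {C : Set V}
    (hC : Convex ℝ C) (f : ι → V →ₗ[ℝ] ℝ) (S : Finset ι) {z : V} (hz : z ∈ C)
    (hfz : ∀ l ∈ S, f l z < 0) :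
    ∃ S' ⊆ S, (∀ x ∈ C, (∀ l ∈ S', f l x ≤ 0) → ∀ l ∈ S, f l x ≤ 0) ∧
      ∀ k ∈ S', ∃ w ∈ C, f k w = 0 ∧ ∀ l ∈ S', l ≠ k → f l w < 0 := by
  classical
  let cuts (S' : Finset ι) : Prop := ∀ x ∈ C, (∀ l ∈ S', f l x ≤ 0) → ∀ l ∈ S, f l x ≤ 0
  obtain ⟨S', hS', hmin⟩ := Finset.exists_min_image (S.powerset.filter cuts) Finset.card
    ⟨S, by simp [cuts]⟩
  simp only [Finset.mem_filter, Finset.mem_powerset] at hS' hmin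
  refine ⟨S', hS'.1, hS'.2, fun k hk => ?_⟩
  obtain ⟨y, hyC, hy, hky⟩ : ∃ y ∈ C, (∀ l ∈ S'.erase k, f l y ≤ 0) ∧ 0 < f k y := by
    by_contra! hredundant
    refine absurd (Finset.card_erase_lt_of_mem hk) (not_lt.2 (hmin _
      ⟨(Finset.erase_subset _ _).trans hS'.1, fun x hx hl => hS'.2 x hx fun l hlS => ?_⟩))
    rcases eq_or_ne l k with rfl | hne
    · exact hredundant x hx hl
    · exact hl l (Finset.mem_erase.2 ⟨hne, hlS⟩)
  have hkz := hfz k (hS'.1 hk)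
  have hd : 0 < f k y - f k z := by linarith
  have hb : 0 ≤ -f k z / (f k y - f k z) := div_nonneg (by linarith) hd.le
  refine ⟨(f k y / (f k y - f k z)) • z + (-f k z / (f k y - f k z)) • y,
    hC hz hyC (by positivity) hb (by field_simp; ring), ?_, fun l hl hne => ?_⟩
  · simp only [map_add, map_smul, smul_eq_mul]; field_simp; ring
  · simp only [map_add, map_smul, smul_eq_mul]
    exact add_neg_of_neg_of_nonpos (mul_neg_of_pos_of_neg (by positivity) (hfz l (hS'.1 hl)))
      (mul_nonpos_of_nonneg_of_nonpos hb (hy l (Finset.mem_erase.2 ⟨hne, hl⟩)))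

lemma exists_norm_sub_le_of_mem_convexHull {E : Type*} [NormedAddCommGroup E]
    [InnerProductSpace ℝ E] {s : Set E} (hs : s.Finite) (hball : ∀ y ∈ s, ‖y‖ ≤ 1) {v : E}
    (hv : ‖v‖ = 1) : ∃ C : ℝ, ∀ y ∈ convexHull ℝ s, ‖y - v‖ ≤ C * (1 - inner ℝ v y) := by
  have hpoint : ∀ y ∈ s, ∀ᶠ C : ℝ in Filter.atTop, ‖y - v‖ ≤ C * (1 - inner ℝ v y) := by
    intro y hy
    rcases eq_or_ne y v with rfl | hne
    · simp [hv]
    have hlt : inner ℝ v y < 1 := by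
      have hpos : 0 < ‖y - v‖ ^ 2 := by have := sub_ne_zero.2 hne; positivity
      rw [norm_sub_sq_real, hv, real_inner_comm] at hpos
      nlinarith [hball y hy, norm_nonneg y]
    filter_upwards [Filter.eventually_ge_atTop (‖y - v‖ / (1 - inner ℝ v y))] with C hC
    rwa [div_le_iff₀ (sub_pos.2 hlt)] at hC
  obtain ⟨C, hC⟩ := ((Set.Finite.eventually_all hs).2 hpoint).exists
  have hconvex : Convex ℝ {y : E | ‖y - v‖ + C * inner ℝ v y ≤ C} := by
    have hdist := convexOn_dist (E := E) v convex_univ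
    have hlin := (C • innerₛₗ ℝ v).convexOn (convex_univ (𝕜 := ℝ))
    simpa [dist_eq_norm] using (hdist.add hlin).convex_le C
  refine ⟨C, fun y hy => ?_⟩
  have := convexHull_min (fun y hy => ?_) hconvex hy
  · rw [Set.mem_ofPred_eq] at this; linarith
  · rw [Set.mem_ofPred_eq]; linarith [hC y hy]

end Convexity

namespace HypPolyhedron

/-! ### Polyhedra in the Klein model -/

section KleinModel

variable {n : ℕ} {P : HypPolyhedron n} {x : Fin (n + 1) → ℝ} {y : EuclideanSpace ℝ (Fin n)}

/-- The cone over the polyhedron in the open forward light cone. -/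
def cone (P : HypPolyhedron n) : Set (Fin (n + 1) → ℝ) :=
  {x ∈ forwardCone n | ∀ k, mink (P.e k) x ≤ 0}

lemma smul_mem_cone {c : ℝ} (hc : 0 < c) (hx : x ∈ P.cone) : c • x ∈ P.cone :=
  ⟨smul_mem_forwardCone hc hx.1, fun k => by
    rw [mink_smul_right]; exact mul_nonpos_of_nonneg_of_nonpos hc.le (hx.2 k)⟩

lemma kleinLift_kleinMap_mem_cone (hx : x ∈ P.cone) : kleinLift (kleinMap x) ∈ P.cone := by
  have hx0 := hx.1.2
  rw [← inv_smul_smul₀ hx0.ne' (kleinLift (kleinMap x)), smul_kleinLift_kleinMap hx0.ne']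
  exact smul_mem_cone (inv_pos.2 hx0) hx

lemma kleinMap_image_carrier (P : HypPolyhedron n) :
    kleinMap '' P.carrier = {y | kleinLift y ∈ P.cone} := by
  ext y
  constructor
  · rintro ⟨x, ⟨⟨hx, hx0⟩, hk⟩, rfl⟩
    exact kleinLift_kleinMap_mem_cone ⟨⟨hx ▸ neg_one_lt_zero, hx0⟩, hk⟩
  · intro hy
    have hpos : 0 < -mink (kleinLift y) (kleinLift y) := neg_pos.2 hy.1.1
    have hs := Real.sqrt_pos.2 hpos
    obtain ⟨hF, hk⟩ := smul_mem_cone (inv_pos.2 hs) hy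
    refine ⟨_, ⟨⟨?_, hF.2⟩, hk⟩, by rw [kleinMap_smul (inv_pos.2 hs).ne', kleinMap_kleinLift]⟩
    rw [mink_smul_left, mink_smul_right]
    field_simp
    rw [Real.sq_sqrt hpos.le, neg_neg]

lemma mem_cl_iff : y ∈ P.cl ↔ ‖y‖ ≤ 1 ∧ ∀ k, mink (P.e k) (kleinLift y) ≤ 0 := by
  let K : Set (EuclideanSpace ℝ (Fin n)) :=
    Metric.closedBall 0 1 ∩ ⋂ k, {y | mink (P.e k) (kleinLift y) ≤ 0}
  have himage : ∀ y, y ∈ kleinMap '' P.carrier ↔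
      y ∈ Metric.ball 0 1 ∧ ∀ k, mink (P.e k) (kleinLift y) ≤ 0 := fun y => by
    rw [kleinMap_image_carrier, Set.mem_ofPred_eq, mem_ball_zero_iff,
      ← kleinLift_mem_forwardCone_iff]
    rfl
  have himageK : kleinMap '' P.carrier ⊆ K := fun y hy =>
    ⟨Metric.ball_subset_closedBall ((himage y).1 hy).1, Set.mem_iInter.2 ((himage y).1 hy).2⟩
  have hKimage : interior K ⊆ kleinMap '' P.carrier := fun y hy => by
    have hball := interior_mono Set.inter_subset_left hy
    rw [interior_closedBall _ one_ne_zero] at hball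
    exact (himage y).2 ⟨hball, by simpa [K] using (interior_subset hy).2⟩
  have hclosed : IsClosed K := Metric.isClosed_closedBall.inter (isClosed_iInter fun k =>
    isClosed_le ((continuous_mink _).comp continuous_kleinLift) continuous_const)
  have hconvex : Convex ℝ K := (convex_closedBall 0 1).inter (convex_iInter fun k => by
    simp only [mink_kleinLift, sub_nonpos]
    exact convex_halfSpace_le (innerₛₗ ℝ (spat n (P.e k))).isLinear (P.e k 0))
  have hclosure : closure (kleinMap '' P.carrier) = K := by
    refine (closure_minimal himageK hclosed).antisymm ?_
    rw [← hclosed.closure_eq, ← hconvex.closure_interior_eq_closure_of_nonempty_interior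
      (P.nonempty_int.mono (interior_mono himageK))]
    exact closure_mono hKimage
  rw [cl, hclosure]
  simp [K]

lemma kleinMap_mem_cl (hx : x ∈ P.cone) : kleinMap x ∈ P.cl := by
  refine subset_closure ?_
  rw [kleinMap_image_carrier]
  exact kleinLift_kleinMap_mem_cone hx

lemma spat_ne_zero (P : HypPolyhedron n) (k : Fin P.m) : spat n (P.e k) ≠ 0 := fun h => by
  have := mink_self (P.e k)
  rw [P.unit, h, norm_zero] at this
  linarith [sq_nonneg (P.e k 0)]

lemma exists_strict (P : HypPolyhedron n) : ∃ z ∈ forwardCone n, ∀ k, mink (P.e k) z < 0 := by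
  obtain ⟨y, hy⟩ := P.nonempty_int
  change y ∈ interior (kleinMap '' P.carrier) at hy
  rw [kleinMap_image_carrier] at hy
  refine ⟨kleinLift y, (interior_subset hy).1, fun k => ?_⟩
  have hcont : Filter.Tendsto (fun t : ℝ => y + t • spat n (P.e k)) (nhdsWithin 0 (Set.Ioi 0))
      (nhds y) := by
    have : Continuous fun t : ℝ => y + t • spat n (P.e k) := by fun_prop
    simpa using (this.tendsto 0).mono_left nhdsWithin_le_nhds
  obtain ⟨t, ht, ht0 : 0 < t⟩ := ((hcont.eventually (mem_interior_iff_mem_nhds.1 hy)).and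
    self_mem_nhdsWithin).exists
  have hpos : 0 < t * ‖spat n (P.e k)‖ ^ 2 := by have := P.spat_ne_zero k; positivity
  have hle := ht.2 k
  rw [mink_kleinLift, inner_add_right, inner_smul_right, real_inner_self_eq_norm_sq] at hle
  rw [mink_kleinLift]
  linarith

lemma mem_idealVerts_iff : y ∈ P.idealVerts ↔ y ∈ P.cl ∧ ‖y‖ = 1 := by
  refine ⟨fun ⟨h, hn⟩ => ⟨h.subset rfl, hn⟩, fun ⟨h, hn⟩ => ⟨fun _ => ⟨innerSL ℝ y, ?_⟩, hn⟩⟩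
  have hle : ∀ w ∈ P.cl, inner ℝ y w ≤ 1 := fun w hw => by
    simpa [hn] using (real_inner_le_norm y w).trans
      (mul_le_mul_of_nonneg_left (mem_cl_iff.1 hw).1 (norm_nonneg y))
  have hyy : inner ℝ y y = 1 := by rw [real_inner_self_eq_norm_sq, hn, one_pow]
  ext x
  simp only [Set.mem_singleton_iff, innerSL_apply_apply, Set.mem_ofPred_eq]
  refine ⟨?_, fun ⟨hx, hmax⟩ => ?_⟩
  · rintro rfl
    exact ⟨h, fun w hw => hyy ▸ hle w hw⟩
  · have hmax : 1 ≤ inner ℝ y x := hyy ▸ hmax y h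
    have hdist : ‖x - y‖ ^ 2 ≤ 0 := by
      rw [norm_sub_sq_real, hn, real_inner_comm]
      nlinarith [(mem_cl_iff.1 hx).1, norm_nonneg x]
    exact sub_eq_zero.1 (norm_eq_zero.1 (pow_eq_zero_iff two_ne_zero |>.1
      (hdist.antisymm (sq_nonneg _))))

lemma kleinMap_mem_idealVerts (hx : mink x x = 0) (hx0 : 0 < x 0)
    (hk : ∀ k, mink (P.e k) x ≤ 0) : kleinMap x ∈ P.idealVerts := by
  have hnorm := norm_kleinMap_eq_one hx hx0.ne'
  refine mem_idealVerts_iff.2 ⟨mem_cl_iff.2 ⟨hnorm.le, fun k => ?_⟩, hnorm⟩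
  exact nonpos_of_mul_nonpos_right (mink_kleinLift_kleinMap _ hx0.ne' ▸ hk k) hx0

end KleinModel

section Irredundant

variable {n : ℕ}

/-- No wall is redundant: each one carries a point lying strictly inside all other half-spaces. -/
def IsIrredundant (P : HypPolyhedron n) : Prop :=
  ∀ k, ∃ w ∈ forwardCone n, mink (P.e k) w = 0 ∧ ∀ l ≠ k, mink (P.e l) w < 0

lemma exists_isIrredundant (P : HypPolyhedron n) :
    ∃ (Q : HypPolyhedron n) (φ : Fin Q.m ↪ Fin P.m), (∀ k, Q.e k = P.e (φ k)) ∧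
      Q.carrier = P.carrier ∧ Q.IsIrredundant := by
  obtain ⟨z, hz, hkz⟩ := P.exists_strict
  obtain ⟨S, -, hcut, hfacet⟩ := exists_irredundant convex_forwardCone
    (fun k => minkForm n (P.e k)) Finset.univ hz fun l _ => hkz l
  let φ : Fin S.card ↪ Fin P.m := (S.orderEmbOfFin rfl).toEmbedding
  have hφ : ∀ l ∈ S, ∃ k, φ k = l := fun l hl => by
    have : l ∈ Set.range (S.orderEmbOfFin rfl) := by rwa [Finset.range_orderEmbOfFin]
    exact this
  have hcarrier : {x ∈ Hyperboloid n | ∀ k, mink (P.e (φ k)) x ≤ 0} = P.carrier := by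
    refine Set.Subset.antisymm (fun x hx => ⟨hx.1, fun l => ?_⟩) fun x hx => ⟨hx.1, fun k => hx.2 _⟩
    refine hcut x ⟨hx.1.1 ▸ neg_one_lt_zero, hx.1.2⟩ (fun l hl => ?_) l (Finset.mem_univ l)
    obtain ⟨k, rfl⟩ := hφ l hl
    exact hx.2 k
  refine ⟨⟨S.card, P.e ∘ φ, fun k => P.unit _, hcarrier.symm ▸ P.nonempty_int⟩, φ, fun _ => rfl,
    hcarrier, fun k => ?_⟩
  obtain ⟨w, hw, hkw, hlw⟩ := hfacet (φ k) (S.orderEmbOfFin_mem rfl k)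
  exact ⟨w, hw, hkw, fun l hl => hlw _ (S.orderEmbOfFin_mem rfl l) (φ.injective.ne hl)⟩

end Irredundant
end HypPolyhedron

section Spans

lemma vectorSpan_eq_of_eventually_mem {E : Type*} [NormedAddCommGroup E] [NormedSpace ℝ E]
    (D : Submodule ℝ E) {F : Set E} {y : E} (hsub : ∀ x ∈ F, x - y ∈ D)
    (hnhds : ∀ᶠ x in nhds y, x - y ∈ D → x ∈ F) : vectorSpan ℝ F = D := by
  have hy : y ∈ F := hnhds.self_of_nhds (by simp)
  refine le_antisymm ?_ fun v hv => ?_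
  · rw [vectorSpan_eq_span_vsub_set_right ℝ hy, Submodule.span_le]
    rintro _ ⟨x, hx, rfl⟩
    exact hsub x hx
  · have hcont : Filter.Tendsto (fun t : ℝ => y + t • v) (nhdsWithin 0 (Set.Ioi 0)) (nhds y) := by
      have : Continuous fun t : ℝ => y + t • v := by fun_prop
      simpa using (this.tendsto 0).mono_left nhdsWithin_le_nhds
    obtain ⟨t, ht, ht0 : 0 < t⟩ := ((hcont.eventually hnhds).and self_mem_nhdsWithin).exists
    have hm : y + t • v ∈ F := ht (by simpa using D.smul_mem t hv)
    have htv : t • v ∈ vectorSpan ℝ F := by simpa using vsub_mem_vectorSpan ℝ hm hy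
    exact ((vectorSpan ℝ F).smul_mem_iff ht0.ne').1 htv

lemma finite_isExposed_convexHull {E : Type*} [NormedAddCommGroup E] [NormedSpace ℝ E] {s : Set E}
    (hs : s.Finite) : {F | IsExposed ℝ (convexHull ℝ s) F}.Finite := by
  have hcompact := hs.isCompact_convexHull ℝ
  have hconvex := convex_convexHull ℝ s
  refine Set.Finite.of_finite_image (f := Set.extremePoints ℝ) (hs.finite_subsets.subset ?_) ?_
  · rintro _ ⟨F, hF, rfl⟩
    exact hF.isExtreme.extremePoints_subset_extremePoints.trans extremePoints_convexHull_subset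
  · intro F hF G hG (hFG : F.extremePoints ℝ = G.extremePoints ℝ)
    rw [← closure_convexHull_extremePoints (hF.isCompact hcompact) (hF.convex hconvex), hFG,
      closure_convexHull_extremePoints (hG.isCompact hcompact) (hG.convex hconvex)]

end Spans

namespace HypPolyhedron

/-! ### Faces cut out by walls -/

section Faces

variable {n : ℕ} {P : HypPolyhedron n} {A : Finset (Fin P.m)} {w : Fin (n + 1) → ℝ}

/-- The linear subspace on which the walls of `A` vanish. -/
def flat (P : HypPolyhedron n) (A : Finset (Fin P.m)) : Set (Fin (n + 1) → ℝ) :=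
  {x | ∀ k ∈ A, mink (P.e k) x = 0}

/-- The part of the closed polyhedron on which the walls of `A` vanish. -/
def wallSection (P : HypPolyhedron n) (A : Finset (Fin P.m)) : Set (EuclideanSpace ℝ (Fin n)) :=
  {y ∈ P.cl | kleinLift y ∈ P.flat A}

/-- The vector `w` lies on the walls of `A`, and near `w` the cone of `P` is cut out by these walls
being zero: it is an interior point of the section of the cone by the walls of `A`. -/
def IsRelInterior (P : HypPolyhedron n) (A : Finset (Fin P.m)) (w : Fin (n + 1) → ℝ) : Prop :=
  w ∈ P.flat A ∧ P.cone ∈ nhdsWithin w (P.flat A)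

lemma IsRelInterior.mem_cone (h : P.IsRelInterior A w) : w ∈ P.cone :=
  mem_of_mem_nhdsWithin h.1 h.2

lemma isRelInterior_of_forall_lt (T : Set (Fin P.m)) (hw : w ∈ forwardCone n) (hA : w ∈ P.flat A)
    (hcut : ∀ x ∈ forwardCone n, x ∈ P.flat A → (∀ l ∈ T, mink (P.e l) x ≤ 0) → x ∈ P.cone)
    (hlt : ∀ l ∈ T, mink (P.e l) w < 0) : P.IsRelInterior A w := by
  have hT : ∀ᶠ x in nhds w, ∀ l, l ∈ T → mink (P.e l) x < 0 :=
    Filter.eventually_all.2 fun l => Filter.eventually_imp_distrib_left.2 fun hl =>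
      (continuous_mink (P.e l)).continuousAt.eventually_lt continuousAt_const (hlt l hl)
  refine ⟨hA, ?_⟩
  filter_upwards [self_mem_nhdsWithin, nhdsWithin_le_nhds (isOpen_forwardCone.mem_nhds hw),
    nhdsWithin_le_nhds hT] with x hxA hx hxT
  exact hcut x hx hxA fun l hl => (hxT l hl).le

lemma kleinLift_kleinMap_mem_flat (hw0 : w 0 ≠ 0) (hw : w ∈ P.flat A) :
    kleinLift (kleinMap w) ∈ P.flat A := fun k hk =>
  (mul_eq_zero.1 ((mink_kleinLift_kleinMap (P.e k) hw0).symm.trans (hw k hk))).resolve_left hw0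

lemma IsRelInterior.kleinMap_mem_wallSection (h : P.IsRelInterior A w) :
    kleinMap w ∈ P.wallSection A :=
  ⟨kleinMap_mem_cl h.mem_cone, kleinLift_kleinMap_mem_flat h.mem_cone.1.2.ne' h.1⟩

lemma isExposed_wallSection (A : Finset (Fin P.m)) : IsExposed ℝ P.cl (P.wallSection A) := by
  rintro ⟨y₀, hy₀, hA₀⟩
  have hsum : ∀ y, inner ℝ (∑ k ∈ A, spat n (P.e k)) y =
      ∑ k ∈ A, mink (P.e k) (kleinLift y) + ∑ k ∈ A, P.e k 0 := fun y => by
    simp only [sum_inner, ← Finset.sum_add_distrib, mink_kleinLift, sub_add_cancel]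
  have hnonpos : ∀ y ∈ P.cl, ∀ k ∈ A, mink (P.e k) (kleinLift y) ≤ 0 := fun y hy k _ =>
    (mem_cl_iff.1 hy).2 k
  refine ⟨innerSL ℝ (∑ k ∈ A, spat n (P.e k)), ?_⟩
  ext y
  simp only [wallSection, Set.mem_ofPred_eq, innerSL_apply_apply, hsum, add_le_add_iff_right]
  refine and_congr_right fun hy => ⟨fun h w hw => ?_, fun h => ?_⟩
  · rw [Finset.sum_eq_zero h]
    exact Finset.sum_nonpos (hnonpos w hw)
  · have hmax := h y₀ hy₀
    rw [Finset.sum_eq_zero hA₀] at hmax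
    exact (Finset.sum_eq_zero_iff_of_nonpos (hnonpos y hy)).1
      ((Finset.sum_nonpos (hnonpos y hy)).antisymm hmax)

lemma IsRelInterior.vectorSpan_wallSection (h : P.IsRelInterior A w) :
    vectorSpan ℝ (P.wallSection A) =
      (Submodule.span ℝ ((fun k => spat n (P.e k)) '' (A : Set (Fin P.m))))ᗮ := by
  have hw0 := h.mem_cone.1.2.ne'
  have hflat := kleinLift_kleinMap_mem_flat hw0 h.1
  have hD : ∀ y, y - kleinMap w ∈
      (Submodule.span ℝ ((fun k => spat n (P.e k)) '' (A : Set (Fin P.m))))ᗮ ↔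
      kleinLift y ∈ P.flat A := fun y => by
    rw [Submodule.mem_orthogonal']
    refine (Submodule.span_le (p := (innerₛₗ ℝ (y - kleinMap w)).ker)).trans ?_
    rw [Set.image_subset_iff]
    refine forall₂_congr fun k hk => ?_
    have hk0 := hflat k hk
    rw [mink_kleinLift] at hk0 ⊢
    change inner ℝ (y - kleinMap w) (spat n (P.e k)) = 0 ↔ _
    rw [real_inner_comm, inner_sub_right]
    constructor <;> intro <;> linarith
  refine vectorSpan_eq_of_eventually_mem _ (y := kleinMap w) (fun y hy => (hD y).2 hy.2) ?_
  have hlim : Filter.Tendsto (fun y => w 0 • kleinLift y) (nhds (kleinMap w)) (nhds w) := by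
    have hcont : Continuous fun y : EuclideanSpace ℝ (Fin n) => w 0 • kleinLift y :=
      continuous_kleinLift.const_smul (w 0)
    simpa only [smul_kleinLift_kleinMap hw0] using hcont.tendsto (kleinMap w)
  filter_upwards [hlim.eventually (mem_nhdsWithin_iff_eventually.1 h.2)] with y hy hyD
  have hyA := (hD y).1 hyD
  have hcone : w 0 • kleinLift y ∈ P.cone :=
    hy fun k hk => by rw [mink_smul_right, hyA k hk, mul_zero]
  refine ⟨?_, hyA⟩
  simpa only [kleinMap_smul hw0, kleinMap_kleinLift] using kleinMap_mem_cl hcone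

lemma IsRelInterior.sdim_wallSection (h : P.IsRelInterior A w)
    (hA : LinearIndepOn ℝ (fun k => spat n (P.e k)) (A : Set (Fin P.m))) :
    sdim (P.wallSection A) + A.card = n := by
  have hcard : Module.finrank ℝ
      (Submodule.span ℝ ((fun k => spat n (P.e k)) '' (A : Set (Fin P.m)))) = A.card := by
    rw [Set.image_eq_range]
    exact (finrank_span_eq_card hA).trans (Fintype.card_coe A)
  rw [sdim, h.vectorSpan_wallSection, add_comm, ← hcard,
    Submodule.finrank_add_finrank_orthogonal, finrank_euclideanSpace_fin]

lemma IsRelInterior.wallSection_mem_faces (h : P.IsRelInterior A w)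
    (hA : LinearIndepOn ℝ (fun k => spat n (P.e k)) (A : Set (Fin P.m))) :
    P.wallSection A ∈ P.faces (n - A.card) :=
  ⟨isExposed_wallSection A, ⟨_, h.kleinMap_mem_wallSection⟩,
    Nat.eq_sub_of_add_eq (h.sdim_wallSection hA)⟩

lemma faceInHyperplane_wallSection {k : Fin P.m} (hk : k ∈ A) :
    P.faceInHyperplane (P.e k) (P.wallSection A) := fun x hx hxA => by
  rw [mink_kleinLift_kleinMap _ hx.1.2.ne', hxA.2 k hk, mul_zero]

lemma IsIrredundant.exists_isRelInterior_singleton (hP : P.IsIrredundant) (k : Fin P.m) :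
    ∃ w, P.IsRelInterior {k} w ∧ ∀ l ≠ k, mink (P.e l) w < 0 := by
  obtain ⟨w, hw, hkw, hlw⟩ := hP k
  refine ⟨w, isRelInterior_of_forall_lt {k}ᶜ hw (by simpa [flat] using hkw)
    (fun x hx hxk hxl => ⟨hx, fun l => ?_⟩) hlw, hlw⟩
  by_cases hl : l = k
  · exact (hxk l (Finset.mem_singleton.2 hl)).le
  · exact hxl l hl

lemma FiniteVolume.finite_faces (hfv : P.FiniteVolume) (k : ℕ) : (P.faces k).Finite :=
  (finite_isExposed_convexHull hfv.1).subset fun _ hF => hfv.2 ▸ hF.1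

lemma IsIrredundant.card_le_a (hP : P.IsIrredundant) (hfv : P.FiniteVolume) :
    P.m ≤ P.a (n - 1) := by
  rw [a, ← Nat.card_fin P.m, ← Set.ncard_univ]
  refine Set.ncard_le_ncard_of_injOn (fun k => P.wallSection {k}) (fun k _ => ?_) ?_
    (hfv.finite_faces _)
  · obtain ⟨w, hw, -⟩ := hP.exists_isRelInterior_singleton k
    exact hw.wallSection_mem_faces (by simpa using P.spat_ne_zero k)
  · intro k _ l _ (hkl : P.wallSection {k} = P.wallSection {l})
    by_contra hne
    obtain ⟨w, hw, hlw⟩ := hP.exists_isRelInterior_singleton k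
    have hmem := (hkl ▸ hw.kleinMap_mem_wallSection).2 l (Finset.mem_singleton_self l)
    have hw0 := mink_kleinLift_kleinMap (P.e l) hw.mem_cone.1.2.ne'
    rw [hmem, mul_zero] at hw0
    exact (hlw l (Ne.symm hne)).ne hw0

end Faces

section RightAngled

variable {n : ℕ} {P : HypPolyhedron n} {i j : Fin P.m} {w x : Fin (n + 1) → ℝ}

lemma IsIrredundant.linearIndepOn_pair (hP : P.IsIrredundant) (hij : i ≠ j) (hw : w ∈ P.flat {i, j})
    (hw0 : w 0 ≠ 0) : LinearIndepOn ℝ (fun k => spat n (P.e k)) {i, j} := by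
  rw [LinearIndepOn.pair_iff _ hij]
  intro s t hst
  have hiw := hw i (by simp)
  have hjw := hw j (by simp)
  have hzero : s • P.e i + t • P.e j = 0 := by
    rw [← map_smul, ← map_smul, ← map_add] at hst
    refine eq_of_spat_eq ?_ (hst.trans (map_zero _).symm)
    have h := mink_eq_inner (s • P.e i + t • P.e j) w
    rw [hst, inner_zero_left, add_zero, mink_add_left, mink_smul_left, mink_smul_left, hiw, hjw]
      at h
    simpa [hw0] using h
  have hpair : ∀ x, s * mink (P.e i) x + t * mink (P.e j) x = 0 := fun x => by
    rw [← mink_smul_left, ← mink_smul_left, ← mink_add_left, hzero]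
    exact (minkForm n).map_zero₂ x
  obtain ⟨wi, -, hii, hji⟩ := hP i
  obtain ⟨wj, -, hjj, hij'⟩ := hP j
  have hs := hpair wj
  have ht := hpair wi
  rw [hjj, mul_zero, add_zero] at hs
  rw [hii, mul_zero, zero_add] at ht
  exact ⟨(mul_eq_zero.1 hs).resolve_right (hij' i hij).ne,
    (mul_eq_zero.1 ht).resolve_right (hji j hij.symm).ne⟩

lemma IsIrredundant.mink_eq_zero_of_isRelInterior (hP : P.IsIrredundant)
    (hra : P.IsRightAngled) (hij : i ≠ j) (hw : P.IsRelInterior {i, j} w) :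
    mink (P.e i) (P.e j) = 0 := by
  have hli := hP.linearIndepOn_pair hij hw.1 hw.mem_cone.1.2.ne'
  have hface := hw.wallSection_mem_faces (by rwa [Finset.coe_pair])
  rw [Finset.card_pair hij] at hface
  exact hra i j hij
    ⟨_, hface, faceInHyperplane_wallSection (by simp), faceInHyperplane_wallSection (by simp)⟩

/-- On the wall `i`, the polyhedron is cut out by the walls orthogonal to that wall: after
discarding redundant inequalities the remaining walls meet it in faces of codimension two. -/
lemma IsIrredundant.mem_cone_of_orthogonal (hP : P.IsIrredundant) (hra : P.IsRightAngled)
    (hx : x ∈ forwardCone n) (hix : mink (P.e i) x = 0)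
    (hk : ∀ k, mink (P.e i) (P.e k) = 0 → mink (P.e k) x ≤ 0) : x ∈ P.cone := by
  classical
  obtain ⟨wi, hwi, hii, hiw⟩ := hP i
  have hconv : Convex ℝ (forwardCone n ∩ {x | mink (P.e i) x = 0}) :=
    convex_forwardCone.inter (convex_hyperplane (minkForm n (P.e i)).isLinear 0)
  obtain ⟨S, hS, hcut, hfacet⟩ := exists_irredundant hconv (fun k => minkForm n (P.e k))
    (Finset.univ.erase i) ⟨hwi, hii⟩ fun l hl => hiw l (Finset.ne_of_mem_erase hl)
  have hcone : ∀ y ∈ forwardCone n, mink (P.e i) y = 0 → (∀ l ∈ S, mink (P.e l) y ≤ 0) →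
      y ∈ P.cone := fun y hy hiy hyS => ⟨hy, fun l => by
    by_cases hli : l = i
    · exact hli ▸ hiy.le
    · exact hcut y ⟨hy, hiy⟩ hyS l (Finset.mem_erase.2 ⟨hli, Finset.mem_univ l⟩)⟩
  refine hcone x hx hix fun k hkS => hk k ?_
  obtain ⟨w, ⟨hw, hiw' : mink (P.e i) w = 0⟩, hkw : mink (P.e k) w = 0, hlw⟩ := hfacet k hkS
  have hik : i ≠ k := (Finset.ne_of_mem_erase (hS hkS)).symm
  refine hP.mink_eq_zero_of_isRelInterior hra hik (isRelInterior_of_forall_lt {l ∈ S | l ≠ k} hw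
    (by simp [flat, hiw', hkw]) (fun y hy hyA hyT => hcone y hy (hyA i (by simp)) fun l hl => ?_)
    fun l hl => hlw l hl.1 hl.2)
  by_cases hlk : l = k
  · exact (hyA l (by simp [hlk])).le
  · exact hyT l ⟨hl, hlk⟩

lemma IsIrredundant.minkProj_mem_cone (hP : P.IsIrredundant) (hra : P.IsRightAngled)
    (i : Fin P.m) (hx : x ∈ P.cone) : minkProj (P.e i) x ∈ P.cone := by
  have hi : 0 < mink (P.e i) (P.e i) := P.unit i ▸ one_pos
  refine hP.mem_cone_of_orthogonal hra (minkProj_mem_forwardCone hi hx.1)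
    (mink_minkProj_self hi.ne' x) fun k hk => ?_
  rw [mink_minkProj_of_orthogonal (mink_comm _ _ ▸ hk)]
  exact hx.2 k

lemma IsIrredundant.mink_nonpos (hP : P.IsIrredundant) (hra : P.IsRightAngled) (hij : i ≠ j) :
    mink (P.e i) (P.e j) ≤ 0 := by
  obtain ⟨w, hw, hlw⟩ := hP.exists_isRelInterior_singleton j
  have hproj := (hP.minkProj_mem_cone hra i hw.mem_cone).2 j
  rw [mink_minkProj, P.unit, div_one, hw.1 j (Finset.mem_singleton_self j), zero_sub,
    neg_nonpos, mink_comm (P.e j)] at hproj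
  exact nonpos_of_mul_nonneg_right hproj (hlw i hij)

/-- If the walls `i` and `j` meet, then successively projecting an interior point to the wall `i`
and to its intersection with the wall `j` gives an interior point of a face of codimension two. -/
lemma IsIrredundant.mink_eq_zero_or_le_neg_one (hP : P.IsIrredundant) (hra : P.IsRightAngled)
    (hij : i ≠ j) : mink (P.e i) (P.e j) = 0 ∨ mink (P.e i) (P.e j) ≤ -1 := by
  by_contra! ⟨hne, hlt⟩
  set g := mink (P.e i) (P.e j) with hg
  have hg0 : g ≤ 0 := hP.mink_nonpos hra hij
  have hi : 0 < mink (P.e i) (P.e i) := P.unit i ▸ one_pos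
  obtain ⟨z, hz, hkz⟩ := P.exists_strict
  set u := minkProj (P.e i) (P.e j) with hu
  set p := minkProj (P.e i) z
  set y := minkProj u p
  have hju : ∀ x, mink (P.e j) x = mink u x + g * mink (P.e i) x := fun x => by
    rw [mink_comm u, hu, mink_minkProj, P.unit, div_one, ← hg, mink_comm x, mink_comm x]; ring
  have hiu : mink (P.e i) u = 0 := mink_minkProj_self hi.ne' _
  have hip : mink (P.e i) p = 0 := mink_minkProj_self hi.ne' z
  have huu : 0 < mink u u := by
    have hjj := hju (P.e j)
    rw [P.unit, ← hg, mink_comm u, hju, hiu] at hjj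
    nlinarith
  have hup : mink u p ≤ 0 := by
    have hjp := hju p
    rw [hip, mul_zero, add_zero, mink_minkProj, P.unit, div_one,
      mink_comm (P.e j) (P.e i), ← hg] at hjp
    nlinarith [hkz i, hkz j]
  have hiy : mink (P.e i) y = 0 := by rw [mink_minkProj_of_orthogonal hiu, hip]
  have hjy : mink (P.e j) y = 0 := by rw [hju, hiy, mink_minkProj_self huu.ne', mul_zero, add_zero]
  have hky : ∀ k, mink (P.e i) (P.e k) = 0 → mink (P.e k) y < 0 := fun k hk => by
    have hkj : k ≠ j := fun h => hne (by rwa [h] at hk)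
    have hki : mink (P.e k) (P.e i) = 0 := mink_comm _ _ ▸ hk
    rw [mink_minkProj, mink_minkProj_of_orthogonal hki, mink_minkProj_of_orthogonal hki]
    exact (sub_le_self _ (mul_nonneg_of_nonpos_of_nonpos
      (div_nonpos_of_nonpos_of_nonneg hup huu.le) (hP.mink_nonpos hra hkj))).trans_lt (hkz k)
  refine hne (hP.mink_eq_zero_of_isRelInterior hra hij
    (isRelInterior_of_forall_lt {k | mink (P.e i) (P.e k) = 0} ?_ (by simp [flat, hiy, hjy])
      (fun x hx hxA hxT => hP.mem_cone_of_orthogonal hra hx (hxA i (by simp)) hxT) hky))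
  exact minkProj_mem_forwardCone huu (minkProj_mem_forwardCone hi hz)

lemma IsIrredundant.mink_eq_zero_of_common_point (hP : P.IsIrredundant) (hra : P.IsRightAngled)
    (hij : i ≠ j) (hx : x ∈ forwardCone n) (hix : mink (P.e i) x = 0) (hjx : mink (P.e j) x = 0) :
    mink (P.e i) (P.e j) = 0 := by
  refine (hP.mink_eq_zero_or_le_neg_one hra hij).resolve_right fun hle => ?_
  obtain ⟨z, -, hkz⟩ := P.exists_strict
  have hne : P.e i + P.e j ≠ 0 := fun h0 => by
    have hsum : mink (P.e i + P.e j) z = 0 := h0 ▸ (minkForm n).map_zero₂ z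
    linarith [mink_add_left (P.e i) (P.e j) z, hkz i, hkz j]
  have hpos := mink_self_pos_of_orthogonal hx (by rw [mink_add_left, hix, hjx, add_zero]) hne
  rw [mink_add_left, mink_add_right, mink_add_right, P.unit, P.unit, mink_comm (P.e j)] at hpos
  linarith

end RightAngled

/-! ### The cusp at an ideal vertex -/

section Cusp

variable {n : ℕ} {P : HypPolyhedron n} {v : EuclideanSpace ℝ (Fin n)} {k l : Fin P.m}
  {u : Fin (n + 1) → ℝ}

lemma mink_kleinLift_nonpos_of_mem_idealVerts (hv : v ∈ P.idealVerts) (k : Fin P.m) :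
    mink (P.e k) (kleinLift v) ≤ 0 :=
  (mem_cl_iff.1 (mem_idealVerts_iff.1 hv).1).2 k

lemma eventually_smul_kleinLift_add_mem_cone (hv : v ∈ P.idealVerts)
    (hu : mink u (kleinLift v) < 0)
    (hwalls : ∀ k, mink (P.e k) (kleinLift v) = 0 → mink (P.e k) u ≤ 0) :
    ∀ᶠ s : ℝ in Filter.atTop, s • kleinLift v + u ∈ P.cone := by
  have hneg : ∀ a c : ℝ, a < 0 → ∀ᶠ s : ℝ in Filter.atTop, s * a + c < 0 := fun a c ha =>
    (Filter.tendsto_atBot_add_const_right _ c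
      (Filter.tendsto_id.atTop_mul_const_of_neg ha)).eventually_lt_atBot 0
  have hwall : ∀ k, ∀ᶠ s : ℝ in Filter.atTop, mink (P.e k) (s • kleinLift v + u) ≤ 0 := fun k => by
    simp only [mink_add_right, mink_smul_right]
    rcases (mink_kleinLift_nonpos_of_mem_idealVerts hv k).eq_or_lt with hk | hk
    · simp [hk, hwalls k hk]
    · exact (hneg _ _ hk).mono fun _ => le_of_lt
  filter_upwards [hneg _ (mink u u) (mul_neg_of_pos_of_neg two_pos hu),
    Filter.eventually_gt_atTop (-u 0), Filter.eventually_all.2 hwall] with s hself hs0 hs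
  refine ⟨⟨?_, ?_⟩, hs⟩
  · simp only [mink_add_left, mink_add_right, mink_smul_left, mink_smul_right,
      mink_kleinLift_self_eq_zero hv.2, mink_comm (kleinLift v) u]
    linarith
  · simp only [Pi.add_apply, Pi.smul_apply, kleinLift_zero_coord, smul_eq_mul, mul_one]
    linarith

lemma FiniteVolume.exists_norm_spat_sub_le_of_mem_cone (hfv : P.FiniteVolume) (hv : ‖v‖ = 1) :
    ∃ C : ℝ, ∀ x ∈ P.cone, ‖spat n x - x 0 • v‖ ≤ C * -mink x (kleinLift v) := by
  obtain ⟨C, hC⟩ := exists_norm_sub_le_of_mem_convexHull hfv.1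
    (fun y hy => (mem_cl_iff.1 (hy.subset rfl)).1) hv
  refine ⟨C, fun x hx => ?_⟩
  have hx0 := hx.1.2
  have hspat : spat n x = x 0 • kleinMap x := by
    conv_lhs => rw [← smul_kleinLift_kleinMap hx0.ne', map_smul, spat_kleinLift]
  have hpair : -mink x (kleinLift v) = x 0 * (1 - inner ℝ v (kleinMap x)) := by
    rw [mink_kleinLift, hspat, real_inner_smul_left, real_inner_comm]; ring
  calc ‖spat n x - x 0 • v‖ = x 0 * ‖kleinMap x - v‖ := by
        rw [hspat, ← smul_sub, norm_smul, Real.norm_of_nonneg hx0.le]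
    _ ≤ x 0 * (C * (1 - inner ℝ v (kleinMap x))) :=
        mul_le_mul_of_nonneg_left (hC _ (hfv.2 ▸ kleinMap_mem_cl hx)) hx0.le
    _ = C * -mink x (kleinLift v) := by rw [hpair]; ring

/-- Adding a multiple of `kleinLift v` changes neither side of the bound on the cone of `P`, which
therefore holds on the whole cone cut out by the walls through the ideal vertex. -/
lemma FiniteVolume.exists_norm_spat_sub_le (hfv : P.FiniteVolume) (hv : v ∈ P.idealVerts) :
    ∃ C : ℝ, ∀ u, mink u (kleinLift v) < 0 →
      (∀ k, mink (P.e k) (kleinLift v) = 0 → mink (P.e k) u ≤ 0) →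
      ‖spat n u - u 0 • v‖ ≤ C * -mink u (kleinLift v) := by
  obtain ⟨C, hC⟩ := hfv.exists_norm_spat_sub_le_of_mem_cone hv.2
  refine ⟨C, fun u hu hwalls => ?_⟩
  obtain ⟨s, hs⟩ := (eventually_smul_kleinLift_add_mem_cone hv hu hwalls).exists
  have hspat : spat n (s • kleinLift v + u) - (s • kleinLift v + u) 0 • v =
      spat n u - u 0 • v := by
    simp only [map_add, map_smul, spat_kleinLift, Pi.add_apply, Pi.smul_apply,
      kleinLift_zero_coord, smul_eq_mul, mul_one]
    module
  have hpair : mink (s • kleinLift v + u) (kleinLift v) = mink u (kleinLift v) := by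
    rw [mink_add_left, mink_smul_left, mink_kleinLift_self_eq_zero hv.2, mul_zero, zero_add]
  simpa only [hspat, hpair] using hC _ hs

lemma FiniteVolume.eq_smul_of_recession (hfv : P.FiniteVolume) (hv : v ∈ P.idealVerts)
    (hu : mink u (kleinLift v) = 0)
    (hwalls : ∀ k, mink (P.e k) (kleinLift v) = 0 → mink (P.e k) u ≤ 0) :
    u = u 0 • kleinLift v := by
  obtain ⟨C, hC⟩ := hfv.exists_norm_spat_sub_le hv
  obtain ⟨z, hz, hkz⟩ := P.exists_strict
  have hzv := mink_kleinLift_neg hz hv.2.le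
  have hbound : ∀ ε : ℝ, 0 < ε → ‖spat n (u + ε • z) - (u + ε • z) 0 • v‖ ≤
      C * -(ε * mink z (kleinLift v)) := fun ε hε => by
    have hpair : mink (u + ε • z) (kleinLift v) = ε * mink z (kleinLift v) := by
      rw [mink_add_left, mink_smul_left, hu, zero_add]
    rw [← hpair]
    refine hC _ (hpair ▸ mul_neg_of_pos_of_neg hε hzv) fun k hk => ?_
    rw [mink_add_right, mink_smul_right]
    exact add_nonpos (hwalls k hk) (mul_nonpos_of_nonneg_of_nonpos hε.le (hkz k).le)
  have hlim : ‖spat n u - u 0 • v‖ ≤ 0 := by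
    have hcont : Continuous fun ε : ℝ => ‖spat n (u + ε • z) - (u + ε • z) 0 • v‖ := by
      simp only [map_add, map_smul, Pi.add_apply, Pi.smul_apply]
      fun_prop
    have hcont' : Continuous fun ε : ℝ => C * -(ε * mink z (kleinLift v)) := by fun_prop
    simpa using le_of_tendsto_of_tendsto ((hcont.tendsto 0).mono_left nhdsWithin_le_nhds)
      ((hcont'.tendsto 0).mono_left nhdsWithin_le_nhds)
      (eventually_nhdsWithin_of_forall (s := Set.Ioi 0) hbound)
  refine eq_smul_kleinLift_of_orthogonal_null hv.2 hu ?_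
  rw [mink_self_eq_norm_sq hv.2 hu, hlim.antisymm (norm_nonneg _), sq, mul_zero]

lemma IsIrredundant.add_eq_smul (hP : P.IsIrredundant) (hra : P.IsRightAngled)
    (hv : ‖v‖ = 1) (hkl : k ≠ l) (hkv : mink (P.e k) (kleinLift v) = 0)
    (hlv : mink (P.e l) (kleinLift v) = 0) (hne : mink (P.e k) (P.e l) ≠ 0) :
    ∃ c : ℝ, 0 < c ∧ P.e k + P.e l = c • kleinLift v := by
  have hle := (hP.mink_eq_zero_or_le_neg_one hra hkl).resolve_left hne
  have hperp : mink (P.e k + P.e l) (kleinLift v) = 0 := by rw [mink_add_left, hkv, hlv, add_zero]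
  have hnull : mink (P.e k + P.e l) (P.e k + P.e l) = 0 := by
    refine le_antisymm ?_ (mink_self_nonneg_of_orthogonal_null hv hperp)
    rw [mink_add_left, mink_add_right, mink_add_right, P.unit, P.unit, mink_comm (P.e l)]
    linarith
  have heq := eq_smul_kleinLift_of_orthogonal_null hv hperp hnull
  refine ⟨_, ?_, heq⟩
  obtain ⟨z, hz, hkz⟩ := P.exists_strict
  have hsum : (P.e k + P.e l) 0 * mink z (kleinLift v) < 0 := by
    rw [mink_comm z, ← mink_smul_left, ← heq, mink_add_left]
    exact add_neg (hkz k) (hkz l)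
  exact pos_of_mul_neg_left hsum (mink_kleinLift_neg hz hv.le).le

lemma IsIrredundant.exists_parallel (hP : P.IsIrredundant) (hra : P.IsRightAngled)
    (hfv : P.FiniteVolume) (hv : v ∈ P.idealVerts) (hkv : mink (P.e k) (kleinLift v) = 0) :
    ∃ l, ∃ c : ℝ, 0 < c ∧ P.e k + P.e l = c • kleinLift v := by
  by_contra! hnot
  have heq := hfv.eq_smul_of_recession hv (u := (-1 : ℝ) • P.e k)
    (by rw [mink_smul_left, hkv, mul_zero]) fun l hlv => by
      rw [mink_smul_right, mink_comm, neg_one_mul, neg_nonpos]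
      rcases eq_or_ne k l with rfl | hkl
      · exact P.unit k ▸ zero_le_one
      · by_contra! hlt
        obtain ⟨c, hc, hsum⟩ := hP.add_eq_smul hra hv.2 hkl hkv hlv hlt.ne
        exact hnot l c hc hsum
  have hkk := congrArg (mink (P.e k)) heq
  rw [mink_smul_right, mink_smul_right, P.unit, hkv] at hkk
  norm_num at hkk

/-- Otherwise every nonzero vector of the horosphere at `v` orthogonal to `R` would be a direction
of recession: a wall through `v` not orthogonal to some wall of `R` is parallel to it. -/
lemma IsIrredundant.exists_orthogonal (hP : P.IsIrredundant) (hra : P.IsRightAngled)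
    (hfv : P.FiniteVolume) (hv : v ∈ P.idealVerts) (R : Finset (Fin P.m))
    (hRv : ∀ i ∈ R, mink (P.e i) (kleinLift v) = 0) (hcard : R.card + 1 < n) :
    ∃ k, mink (P.e k) (kleinLift v) = 0 ∧ ∀ i ∈ R, mink (P.e k) (P.e i) = 0 := by
  let f : (Fin (n + 1) → ℝ) →ₗ[ℝ] (R → ℝ) × ℝ :=
    (LinearMap.pi fun i : R => minkForm n (P.e i)).prod (minkForm n (kleinLift v))
  obtain ⟨u, hu, hu_notMem⟩ : ∃ u ∈ LinearMap.ker f, u ∉ Submodule.span ℝ {kleinLift v} := by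
    by_contra! hle
    have hker := Submodule.finrank_mono
      (show LinearMap.ker f ≤ Submodule.span ℝ {kleinLift v} from hle)
    have hspan := finrank_span_le_card (R := ℝ) ({kleinLift v} : Set (Fin (n + 1) → ℝ))
    have hrank := f.finrank_range_add_finrank_ker
    have hrange := (LinearMap.range f).finrank_le
    simp only [Set.toFinset_singleton, Finset.card_singleton, Module.finrank_fintype_fun_eq_card,
      Fintype.card_fin, Module.finrank_prod, Fintype.card_coe, Module.finrank_self]
      at hspan hrank hrange
    omega
  have huR : ∀ i ∈ R, mink (P.e i) u = 0 := fun i hi => congrFun (congrArg Prod.fst hu) ⟨i, hi⟩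
  have huv : mink u (kleinLift v) = 0 := (mink_comm _ _).trans (congrArg Prod.snd hu)
  by_contra! hnot
  refine hu_notMem (Submodule.mem_span_singleton.2 ⟨u 0, ?_⟩)
  refine (hfv.eq_smul_of_recession hv huv fun k hkv => ?_).symm
  obtain ⟨i, hi, hne⟩ := hnot k hkv
  rcases eq_or_ne k i with rfl | hki
  · exact (huR k hi).le
  obtain ⟨c, -, hsum⟩ := hP.add_eq_smul hra hv.2 hki hkv (hRv i hi) hne
  calc mink (P.e k) u = mink (P.e k + P.e i) u := by rw [mink_add_left, huR i hi, add_zero]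
    _ ≤ 0 := by rw [hsum, mink_smul_left, mink_comm, huv, mul_zero]

end Cusp

section CuspBox

variable {n : ℕ} {P : HypPolyhedron n} {v : EuclideanSpace ℝ (Fin n)}

/-- The walls through the ideal vertex `v`, grouped into pairs of parallel walls `wall i true` and
`wall i false`. They cut a horosphere at `v` in a box, whose edges have lengths proportional to
`width i`. -/
structure CuspBox (P : HypPolyhedron n) (v : EuclideanSpace ℝ (Fin n)) (ι : Type*) where
  wall : ι → Bool → Fin P.m
  width : ι → ℝ
  width_pos : ∀ i, 0 < width i
  mink_vertex : ∀ i s, mink (P.e (wall i s)) (kleinLift v) = 0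
  orthogonal : ∀ i j s t, i ≠ j → mink (P.e (wall i s)) (P.e (wall j t)) = 0
  add_eq : ∀ i s, P.e (wall i s) + P.e (wall i !s) = width i • kleinLift v
  exhaust : ∀ k, mink (P.e k) (kleinLift v) = 0 → ∃ i s, k = wall i s

lemma exists_maximal_orthogonal (P : HypPolyhedron n) (v : EuclideanSpace ℝ (Fin n)) :
    ∃ R : Finset (Fin P.m), (∀ i ∈ R, mink (P.e i) (kleinLift v) = 0) ∧
      (∀ i ∈ R, ∀ j ∈ R, i ≠ j → mink (P.e i) (P.e j) = 0) ∧
      ∀ k, mink (P.e k) (kleinLift v) = 0 → ∃ i ∈ R, mink (P.e k) (P.e i) ≠ 0 := by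
  classical
  let p (R : Finset (Fin P.m)) : Prop := (∀ i ∈ R, mink (P.e i) (kleinLift v) = 0) ∧
    ∀ i ∈ R, ∀ j ∈ R, i ≠ j → mink (P.e i) (P.e j) = 0
  obtain ⟨R, -, ⟨hRv, hRR⟩, hmax⟩ := Finite.exists_le_maximal (p := p) (a := ∅) (by simp [p])
  refine ⟨R, hRv, hRR, fun k hkv => ?_⟩
  by_contra! horth
  have hkR : k ∈ R := hmax (y := insert k R)
    ⟨by simpa [hkv] using hRv, fun i hi j hj hij => ?_⟩ (Finset.subset_insert k R)
      (Finset.mem_insert_self k R)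
  · exact zero_ne_one ((horth k hkR).symm.trans (P.unit k))
  · rcases Finset.mem_insert.1 hi with rfl | hiR <;> rcases Finset.mem_insert.1 hj with rfl | hjR
    · exact absurd rfl hij
    · exact horth j hjR
    · exact mink_comm _ _ ▸ horth i hiR
    · exact hRR i hiR j hjR hij

lemma IsIrredundant.eq_of_add_eq_smul (hP : P.IsIrredundant) (hra : P.IsRightAngled)
    {i k l : Fin P.m} {c d : ℝ} (hkv : mink (P.e k) (kleinLift v) = 0)
    (hk : P.e i + P.e k = c • kleinLift v) (hl : P.e i + P.e l = d • kleinLift v) : k = l := by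
  by_contra hkl
  have hpair : mink (P.e k) (P.e i + P.e k) = mink (P.e k) (P.e i + P.e l) := by
    rw [hk, hl, mink_smul_right, mink_smul_right, hkv, mul_zero, mul_zero]
  rw [mink_add_right, mink_add_right, P.unit] at hpair
  linarith [hP.mink_nonpos hra hkl]

lemma IsIrredundant.exists_cuspBox (hP : P.IsIrredundant) (hra : P.IsRightAngled)
    (hfv : P.FiniteVolume) (hv : v ∈ P.idealVerts) :
    ∃ R : Finset (Fin P.m), n ≤ R.card + 1 ∧ Nonempty (CuspBox P v R) := by
  obtain ⟨R, hRv, hRR, hmax⟩ := P.exists_maximal_orthogonal v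
  refine ⟨R, ?_, ?_⟩
  · by_contra! hcard
    obtain ⟨k, hkv, hk⟩ := hP.exists_orthogonal hra hfv hv R hRv hcard
    obtain ⟨i, hi, hne⟩ := hmax k hkv
    exact hne (hk i hi)
  choose b c hc hbc using fun i : R => hP.exists_parallel hra hfv hv (hRv i i.2)
  have hvv := mink_kleinLift_self_eq_zero hv.2
  have hb : ∀ i : R, P.e (b i) = c i • kleinLift v - P.e i := fun i => eq_sub_of_add_eq' (hbc i)
  have hbv : ∀ i : R, mink (P.e (b i)) (kleinLift v) = 0 := fun i => by
    rw [hb, mink_sub_left, mink_smul_left, hRv i i.2, hvv, mul_zero, sub_zero]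
  have hb_orth : ∀ (i : R) x, mink x (kleinLift v) = 0 → mink (P.e i) x = 0 →
      mink (P.e (b i)) x = 0 := fun i x hxv hix => by
    rw [hb, mink_sub_left, mink_smul_left, mink_comm, hxv, hix, mul_zero, sub_zero]
  have horth : ∀ i j : R, i ≠ j → mink (P.e i) (P.e j) = 0 := fun i j hij =>
    hRR i i.2 j j.2 (Subtype.coe_injective.ne hij)
  refine ⟨⟨fun i s => if s then i else b i, c, hc, ?_, ?_, ?_, fun k hkv => ?_⟩⟩
  · rintro i (_ | _)
    exacts [hbv i, hRv i i.2]
  · rintro i j (_ | _) (_ | _) hij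
    · exact hb_orth i _ (hbv j) (mink_comm _ _ ▸ hb_orth j _ (hRv i i.2) (horth j i hij.symm))
    · exact hb_orth i _ (hRv j j.2) (horth i j hij)
    · exact mink_comm _ _ ▸ hb_orth j _ (hRv i i.2) (horth j i hij.symm)
    · exact horth i j hij
  · rintro i (_ | _)
    exacts [add_comm (P.e i) _ ▸ hbc i, hbc i]
  · obtain ⟨i, hi, hne⟩ := hmax k hkv
    rcases eq_or_ne k i with rfl | hki
    · exact ⟨⟨k, hi⟩, true, rfl⟩
    obtain ⟨d, -, hd⟩ := hP.add_eq_smul hra hv.2 hki hkv (hRv i hi) hne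
    exact ⟨⟨i, hi⟩, false, hP.eq_of_add_eq_smul hra hkv (add_comm (P.e k) _ ▸ hd) (hbc ⟨i, hi⟩)⟩

end CuspBox

/-! ### Corners and centre of the cusp box -/

section Cut

variable {n : ℕ} {P : HypPolyhedron n} {v : EuclideanSpace ℝ (Fin n)} {k l : Fin P.m}
  {x : Fin (n + 1) → ℝ}

/-- The walls meet at the point where the geodesic from `x` to `v` enters the half-space of `k`. -/
lemma IsIrredundant.mink_eq_zero_of_cut (hP : P.IsIrredundant) (hra : P.IsRightAngled)
    (hv : ‖v‖ = 1) (hx : x ∈ puncturedBoundary v) (hkv : mink (P.e k) (kleinLift v) < 0)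
    (hkx : 0 < mink (P.e k) x) (hlv : mink (P.e l) (kleinLift v) = 0)
    (hlx : mink (P.e l) x = 0) : mink (P.e k) (P.e l) = 0 := by
  set s := mink (P.e k) x / -mink (P.e k) (kleinLift v) with hs
  have hs0 : 0 < s := div_pos hkx (neg_pos.2 hkv)
  have hforward : x + s • kleinLift v ∈ forwardCone n := by
    constructor
    · simp only [mink_add_left, mink_add_right, mink_smul_left, mink_smul_right,
        mink_comm (kleinLift v) x, mink_kleinLift_self_eq_zero hv, hx.1, hx.2]
      linarith
    · have hx0 := zero_coord_pos_of_mem_puncturedBoundary hv hx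
      simp only [Pi.add_apply, Pi.smul_apply, kleinLift_zero_coord, smul_eq_mul, mul_one]
      linarith
  refine hP.mink_eq_zero_of_common_point hra ?_ hforward ?_ ?_
  · rintro rfl
    exact hkx.ne' hlx
  · rw [mink_add_right, mink_smul_right, hs, div_neg, neg_mul, div_mul_cancel₀ _ hkv.ne,
      add_neg_cancel]
  · rw [mink_add_right, mink_smul_right, hlv, hlx, mul_zero, add_zero]

end Cut

namespace CuspBox

variable {n : ℕ} {P : HypPolyhedron n} {v : EuclideanSpace ℝ (Fin n)} {ι : Type*}
  (B : CuspBox P v ι) {σ τ : ι → Bool} {k : Fin P.m} {x y : Fin (n + 1) → ℝ}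

/-- The boundary point over the corner of the box at which the walls `wall i (σ i)` meet. -/
def IsCorner (σ : ι → Bool) (x : Fin (n + 1) → ℝ) : Prop :=
  x ∈ puncturedBoundary v ∧ ∀ i, mink (P.e (B.wall i (σ i))) x = 0

/-- The boundary point over the centre of the box. -/
def IsCenter (x : Fin (n + 1) → ℝ) : Prop :=
  x ∈ puncturedBoundary v ∧ ∀ i s, mink (P.e (B.wall i s)) x = -(B.width i / 2)

lemma mink_add_mink_not (i : ι) (s : Bool) (x : Fin (n + 1) → ℝ) :
    mink (P.e (B.wall i s)) x + mink (P.e (B.wall i !s)) x =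
      B.width i * mink x (kleinLift v) := by
  rw [← mink_add_left, B.add_eq, mink_smul_left, mink_comm]

lemma uncurry_wall_injective : Function.Injective (Function.uncurry B.wall) := by
  rintro ⟨i, s⟩ ⟨j, t⟩ (h : B.wall i s = B.wall j t)
  have hone : mink (P.e (B.wall i s)) (P.e (B.wall j t)) = 1 := h ▸ P.unit _
  obtain rfl : i = j := by
    by_contra hij
    exact zero_ne_one ((B.orthogonal i j s t hij).symm.trans hone)
  rcases eq_or_ne t s with rfl | hts
  · rfl
  · have hsum := B.mink_add_mink_not i s (P.e (B.wall i s))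
    rw [← Bool.eq_not.2 hts, mink_comm (P.e (B.wall i t)), hone, P.unit, B.mink_vertex] at hsum
    norm_num at hsum

lemma exists_mem_puncturedBoundary_mink_wall_eq [Finite ι] (hv : ‖v‖ = 1) (σ : ι → Bool)
    (Y : ι → ℝ) : ∃ x ∈ puncturedBoundary v, ∀ i, mink (P.e (B.wall i (σ i))) x = Y i := by
  classical
  refine exists_mem_puncturedBoundary (fun i j => ?_) (fun i => B.mink_vertex i _) hv Y
  split_ifs with hij
  · exact hij ▸ P.unit _
  · exact B.orthogonal i j _ _ hij

lemma exists_isCorner [Finite ι] (hv : ‖v‖ = 1) (σ : ι → Bool) : ∃ x, B.IsCorner σ x :=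
  B.exists_mem_puncturedBoundary_mink_wall_eq hv σ 0

lemma exists_isCenter [Finite ι] (hv : ‖v‖ = 1) : ∃ x, B.IsCenter x := by
  obtain ⟨x, hx, htrue⟩ := B.exists_mem_puncturedBoundary_mink_wall_eq hv (fun _ => true)
    fun i => -(B.width i / 2)
  refine ⟨x, hx, fun i s => ?_⟩
  have hsum := B.mink_add_mink_not i true x
  rw [htrue, hx.2, Bool.not_true] at hsum
  cases s
  · linarith
  · exact htrue i

variable {B}

lemma IsCorner.mink_wall_of_ne (hx : B.IsCorner σ x) {i : ι} {s : Bool} (hs : s ≠ σ i) :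
    mink (P.e (B.wall i s)) x = -B.width i := by
  have hsum := B.mink_add_mink_not i (σ i) x
  rwa [hx.2, zero_add, hx.1.2, mul_neg_one, ← Bool.eq_not.2 hs] at hsum

lemma IsCorner.mink_nonpos (hx : B.IsCorner σ x) (hkv : mink (P.e k) (kleinLift v) = 0) :
    mink (P.e k) x ≤ 0 := by
  obtain ⟨i, s, rfl⟩ := B.exhaust k hkv
  rcases eq_or_ne s (σ i) with rfl | hs
  · exact (hx.2 i).le
  · exact hx.mink_wall_of_ne hs ▸ neg_nonpos.2 (B.width_pos i).le

lemma IsCenter.mink_nonpos (hx : B.IsCenter x) (hkv : mink (P.e k) (kleinLift v) = 0) :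
    mink (P.e k) x ≤ 0 := by
  obtain ⟨i, s, rfl⟩ := B.exhaust k hkv
  exact hx.2 i s ▸ neg_nonpos.2 (half_pos (B.width_pos i)).le

lemma IsCorner.eq (hx : B.IsCorner σ x) (hx' : B.IsCorner τ x) : σ = τ := by
  by_contra hne
  obtain ⟨i, hi⟩ := Function.ne_iff.1 hne
  linarith [hx.2 i, hx'.mink_wall_of_ne hi, B.width_pos i]

lemma IsCorner.not_isCenter [Nonempty ι] (hx : B.IsCorner σ x) : ¬ B.IsCenter x := fun hx' => by
  obtain ⟨i⟩ := ‹Nonempty ι›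
  linarith [hx.2 i, hx'.2 i (σ i), B.width_pos i]

lemma IsCorner.mink_vertex_neg_of_cut (hv : v ∈ P.idealVerts) (hx : B.IsCorner σ x)
    (hkx : 0 < mink (P.e k) x) : mink (P.e k) (kleinLift v) < 0 :=
  (mink_kleinLift_nonpos_of_mem_idealVerts hv k).lt_of_ne fun hkv => (hx.mink_nonpos hkv).not_gt hkx

lemma IsCorner.mink_wall_eq_zero_of_cut (hP : P.IsIrredundant) (hra : P.IsRightAngled)
    (hv : v ∈ P.idealVerts) (hx : B.IsCorner σ x) (hkx : 0 < mink (P.e k) x) (i : ι) :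
    mink (P.e k) (P.e (B.wall i (σ i))) = 0 :=
  hP.mink_eq_zero_of_cut hra hv.2 hx.1 (hx.mink_vertex_neg_of_cut hv hkx) hkx
    (B.mink_vertex i _) (hx.2 i)

lemma IsCorner.width_mul_mink_vertex_le_neg_one (hP : P.IsIrredundant) (hra : P.IsRightAngled)
    (hv : v ∈ P.idealVerts) (hx : B.IsCorner σ x) (hkx : 0 < mink (P.e k) x) (i : ι) :
    B.width i * mink (P.e k) (kleinLift v) ≤ -1 := by
  have hkv := hx.mink_vertex_neg_of_cut hv hkx
  have hneg := mul_neg_of_pos_of_neg (B.width_pos i) hkv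
  have hsum := B.mink_add_mink_not i (σ i) (P.e k)
  rw [mink_comm _ (P.e k), hx.mink_wall_eq_zero_of_cut hP hra hv hkx, zero_add] at hsum
  rw [← hsum, mink_comm] at hneg ⊢
  refine (hP.mink_eq_zero_or_le_neg_one hra ?_).resolve_left hneg.ne
  rintro rfl
  exact hkv.ne (B.mink_vertex i _)

lemma IsCorner.eq_of_cut (hP : P.IsIrredundant) (hra : P.IsRightAngled) (hv : v ∈ P.idealVerts)
    (hx : B.IsCorner σ x) (hy : B.IsCorner τ y) (hkx : 0 < mink (P.e k) x)
    (hky : 0 < mink (P.e k) y) : σ = τ := by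
  by_contra hne
  obtain ⟨i, hi⟩ := Function.ne_iff.1 hne
  have hsum := B.mink_add_mink_not i (σ i) (P.e k)
  rw [← Bool.eq_not.2 hi.symm, mink_comm, mink_comm _ (P.e k),
    hx.mink_wall_eq_zero_of_cut hP hra hv hkx, hy.mink_wall_eq_zero_of_cut hP hra hv hky] at hsum
  linarith [hx.width_mul_mink_vertex_le_neg_one hP hra hv hkx i]

/-- The vector `r` is the orthogonal projection of `y` along the walls meeting at the corner `σ`. -/
lemma IsCenter.exists_projection [Fintype ι] (hy : B.IsCenter y) (σ : ι → Bool) :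
    ∃ r : Fin (n + 1) → ℝ, mink r (kleinLift v) = -1 ∧ mink r r = -∑ i, (B.width i / 2) ^ 2 ∧
      ∀ x, (∀ i, mink x (P.e (B.wall i (σ i))) = 0) → mink x r = mink x y := by
  set r := y + ∑ i, (B.width i / 2) • P.e (B.wall i (σ i)) with hr
  have hxr : ∀ x, mink x r = mink x y + ∑ i, B.width i / 2 * mink x (P.e (B.wall i (σ i))) :=
    fun x => by simp only [hr, mink_add_right, mink_sum_right, mink_smul_right]
  have hwall : ∀ i, mink r (P.e (B.wall i (σ i))) = 0 := fun i => by
    rw [mink_comm, hxr, hy.2, Finset.sum_eq_single_of_mem i (Finset.mem_univ i), P.unit]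
    · ring
    · exact fun j _ hji => by rw [B.orthogonal i j _ _ hji.symm, mul_zero]
  refine ⟨r, ?_, ?_, fun x hx => ?_⟩
  · rw [mink_comm, hxr, mink_comm, hy.1.2]
    simp [mink_comm (kleinLift v), B.mink_vertex]
  · rw [hxr r]
    simp only [hwall, mul_zero, Finset.sum_const_zero, add_zero]
    rw [mink_comm, hxr, hy.1.1, zero_add, ← Finset.sum_neg_distrib]
    exact Finset.sum_congr rfl fun i _ => by rw [mink_comm, hy.2]; ring
  · simp [hxr, hx]

/-- In coordinates on the horosphere where the half-space of `k` is a ball of radius `ρ` about the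
corner, every edge of the box has length at least `ρ`, so its diagonal is at least `2 * ρ` when
the box has dimension at least four. -/
lemma IsCorner.mink_nonpos_of_isCenter [Fintype ι] (hcard : 4 ≤ Fintype.card ι)
    (hP : P.IsIrredundant) (hra : P.IsRightAngled) (hv : v ∈ P.idealVerts) (hx : B.IsCorner σ x)
    (hkx : 0 < mink (P.e k) x) (hy : B.IsCenter y) : mink (P.e k) y ≤ 0 := by
  obtain ⟨r, hrv, hrr, hr⟩ := hy.exists_projection σ
  have hkr := hr _ (hx.mink_wall_eq_zero_of_cut hP hra hv hkx)
  set h := -mink (P.e k) (kleinLift v) with hh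
  have hh0 : 0 < h := neg_pos.2 (hx.mink_vertex_neg_of_cut hv hkx)
  have hspacelike : 0 ≤ mink (P.e k - h • r) (P.e k - h • r) := by
    refine mink_self_nonneg_of_orthogonal_null hv.2 ?_
    rw [mink_sub_left, mink_smul_left, hrv, hh]
    ring
  have hedge : ∀ i, 1 / 4 ≤ (h * (B.width i / 2)) ^ 2 := fun i => by
    nlinarith [hx.width_mul_mink_vertex_le_neg_one hP hra hv hkx i]
  have hdiagonal : 1 ≤ h ^ 2 * ∑ i, (B.width i / 2) ^ 2 := by
    have hcard' : (4 : ℝ) ≤ Fintype.card ι := by exact_mod_cast hcard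
    have hsum := Finset.card_nsmul_le_sum Finset.univ _ _ fun i _ => hedge i
    simp only [mul_pow, ← Finset.mul_sum, nsmul_eq_mul, Finset.card_univ] at hsum
    linarith
  simp only [mink_sub_left, mink_sub_right, mink_smul_left, mink_smul_right, P.unit,
    mink_comm r (P.e k), hkr, hrr] at hspacelike
  nlinarith

end CuspBox

/-! ### Counting walls and ideal vertices -/

section Counting

variable {n : ℕ} {P : HypPolyhedron n} {v : EuclideanSpace ℝ (Fin n)}

lemma card_add_one_le_vInf (hfin : P.idealVerts.Finite) (hv : v ∈ P.idealVerts) {J : Type*}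
    [Fintype J] {x : J → Fin (n + 1) → ℝ} (hx : ∀ j, x j ∈ puncturedBoundary v)
    (hinj : Function.Injective x) (hcone : ∀ j k, mink (P.e k) (x j) ≤ 0) :
    Fintype.card J + 1 ≤ P.vInf := by
  have hinj' : Function.Injective (kleinMap ∘ x) := fun i j hij =>
    hinj (injOn_kleinMap_puncturedBoundary hv.2 (hx i) (hx j) hij)
  have hv_notMem : v ∉ Set.range (kleinMap ∘ x) := by
    rintro ⟨j, hj⟩
    exact kleinMap_ne_of_mem_puncturedBoundary hv.2 (hx j) hj
  have hsub : insert v (Set.range (kleinMap ∘ x)) ⊆ P.idealVerts := by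
    refine Set.insert_subset hv (Set.range_subset_iff.2 fun j => ?_)
    exact kleinMap_mem_idealVerts (hx j).1 (zero_coord_pos_of_mem_puncturedBoundary hv.2 (hx j))
      (hcone j)
  calc Fintype.card J + 1 = (insert v (Set.range (kleinMap ∘ x))).ncard := by
        rw [Set.ncard_insert_of_notMem hv_notMem, Set.ncard_range_of_injective hinj',
          Nat.card_eq_fintype_card]
    _ ≤ P.vInf := Set.ncard_le_ncard hsub hfin

lemma card_add_card_wall_le (hfin : P.idealVerts.Finite) (hv : v ∈ P.idealVerts) {J : Type*}
    [Fintype J] {x : J → Fin (n + 1) → ℝ} (hx : ∀ j, x j ∈ puncturedBoundary v)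
    (hinj : Function.Injective x)
    (hthrough : ∀ j k, mink (P.e k) (kleinLift v) = 0 → mink (P.e k) (x j) ≤ 0)
    (hcut : ∀ i j k, 0 < mink (P.e k) (x i) → 0 < mink (P.e k) (x j) → i = j) :
    Fintype.card J + 1 + Nat.card {k // mink (P.e k) (kleinLift v) = 0} ≤ P.m + P.vInf := by
  classical
  have hideal := card_add_one_le_vInf hfin hv
    (x := fun j : {j // ∀ k, mink (P.e k) (x j) ≤ 0} => x j) (fun j => hx j)
    (hinj.comp Subtype.val_injective) fun j => j.2
  choose f hf using fun j : {j // ¬∀ k, mink (P.e k) (x j) ≤ 0} => not_forall.1 j.2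
  have hcutcard : Fintype.card {j // ¬∀ k, mink (P.e k) (x j) ≤ 0} ≤
      Fintype.card {k // ¬mink (P.e k) (kleinLift v) = 0} :=
    Fintype.card_le_of_injective (fun j => ⟨f j, fun h => hf j (hthrough j _ h)⟩) fun i j hij => by
      have hfij : f i = f j := congrArg Subtype.val hij
      exact Subtype.ext (hcut _ _ (f i) (not_le.1 (hf i)) (hfij ▸ not_le.1 (hf j)))
  have hJ := Fintype.card_subtype_compl (fun j => ∀ k, mink (P.e k) (x j) ≤ 0)
  have hJle := Fintype.card_subtype_le fun j => ∀ k, mink (P.e k) (x j) ≤ 0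
  have hm := Fintype.card_subtype_compl (fun k => mink (P.e k) (kleinLift v) = 0)
  have hmle := Fintype.card_subtype_le fun k => mink (P.e k) (kleinLift v) = 0
  rw [Nat.card_eq_fintype_card]
  rw [Fintype.card_fin] at hm hmle
  omega

lemma CuspBox.le_add_vInf {ι : Type*} [Fintype ι] (B : CuspBox P v ι)
    (hcard : 4 ≤ Fintype.card ι) (hP : P.IsIrredundant) (hra : P.IsRightAngled)
    (hfin : P.idealVerts.Finite) (hv : v ∈ P.idealVerts) :
    2 ^ Fintype.card ι + 2 * (Fintype.card ι + 1) ≤ P.m + P.vInf := by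
  classical
  have : Nonempty ι := Fintype.card_pos_iff.1 (by omega)
  choose x hx using B.exists_isCorner hv.2
  obtain ⟨y, hy⟩ := B.exists_isCenter hv.2
  have hwalls : Fintype.card (ι × Bool) ≤ Nat.card {k // mink (P.e k) (kleinLift v) = 0} := by
    rw [← Nat.card_eq_fintype_card]
    exact Nat.card_le_card_of_injective (fun p => ⟨B.wall p.1 p.2, B.mink_vertex _ _⟩)
      fun p q hpq => B.uncurry_wall_injective (congrArg Subtype.val hpq)
  have hcount := card_add_card_wall_le hfin hv (x := fun o : Option (ι → Bool) => o.elim y x)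
    (by rintro (_ | σ); exacts [hy.1, (hx σ).1]) ?_
    (by rintro (_ | σ) k hkv; exacts [hy.mink_nonpos hkv, (hx σ).mink_nonpos hkv]) ?_
  · simp only [Fintype.card_option, Fintype.card_fun, Fintype.card_prod, Fintype.card_bool]
      at hcount hwalls
    omega
  · rintro (_ | σ) (_ | τ) hστ
    · rfl
    · exact absurd ((show y = x τ from hστ) ▸ hy) (hx τ).not_isCenter
    · exact absurd ((show x σ = y from hστ) ▸ hy) (hx σ).not_isCenter
    · exact congrArg some ((hx σ).eq ((show x σ = x τ from hστ) ▸ hx τ))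
  · rintro (_ | σ) (_ | τ) k hkσ hkτ
    · rfl
    · exact absurd hkσ ((hx τ).mink_nonpos_of_isCenter hcard hP hra hv hkτ hy).not_gt
    · exact absurd hkτ ((hx σ).mink_nonpos_of_isCenter hcard hP hra hv hkσ hy).not_gt
    · exact congrArg some ((hx σ).eq_of_cut hP hra hv (hx τ) hkσ hkτ)

lemma IsIrredundant.le_a_add_vInf (hn : 5 ≤ n) (hP : P.IsIrredundant) (hfv : P.FiniteVolume)
    (hra : P.IsRightAngled) (hv : v ∈ P.idealVerts) :
    2 ^ (n - 1) + 2 * n ≤ P.a (n - 1) + P.vInf := by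
  obtain ⟨R, hR, ⟨B⟩⟩ := hP.exists_cuspBox hra hfv hv
  have hbox := B.le_add_vInf (by rw [Fintype.card_coe]; omega) hP hra
    (hfv.1.subset fun _ hw => hw.1) hv
  have hm := hP.card_le_a hfv
  have hpow : 2 ^ (n - 1) ≤ 2 ^ R.card := Nat.pow_le_pow_right two_pos (by omega)
  rw [Fintype.card_coe] at hbox
  omega

lemma FiniteVolume.idealVerts_nonempty (hfv : P.FiniteVolume) (hnc : ¬ P.IsCompactPoly) :
    P.idealVerts.Nonempty := by
  by_contra! hempty
  refine hnc ⟨hfv, fun w hw => (mem_cl_iff.1 (hw.subset rfl)).1.lt_of_ne fun hw1 => ?_⟩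
  exact hempty.subset ⟨hw, hw1⟩

lemma IsRightAngled.of_embedding {Q : HypPolyhedron n} (hra : P.IsRightAngled)
    (φ : Fin Q.m ↪ Fin P.m) (he : ∀ k, Q.e k = P.e (φ k)) (hQ : Q.carrier = P.carrier) :
    Q.IsRightAngled := by
  rintro i j hij ⟨F, hF, hiF, hjF⟩
  rw [he, he]
  refine hra _ _ (φ.injective.ne hij) ⟨F, ?_, ?_, ?_⟩
  · simpa only [faces, cl, hQ] using hF
  · simpa only [faceInHyperplane, he, hQ] using hiF
  · simpa only [faceInHyperplane, he, hQ] using hjF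

lemma le_a_add_vInf (hn : 5 ≤ n) (hfv : P.FiniteVolume) (hra : P.IsRightAngled)
    (hnc : ¬ P.IsCompactPoly) : 2 ^ (n - 1) + 2 * n ≤ P.a (n - 1) + P.vInf := by
  obtain ⟨v, hv⟩ := hfv.idealVerts_nonempty hnc
  obtain ⟨Q, φ, he, hQ, hirr⟩ := P.exists_isIrredundant
  have hcl : Q.cl = P.cl := by rw [cl, cl, hQ]
  have hverts : Q.verts = P.verts := by rw [verts, verts, hcl]
  have hideal : Q.idealVerts = P.idealVerts := by rw [idealVerts, idealVerts, hverts]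
  have hfvQ : Q.FiniteVolume := by rwa [FiniteVolume, hverts, hcl]
  have hraQ := hra.of_embedding φ he hQ
  have hbound := hirr.le_a_add_vInf hn hfvQ hraQ (hideal ▸ hv)
  rwa [vInf, a, faces, hideal, hcl] at hbound

end Counting
end HypPolyhedron

theorem nu_five_general {n : ℕ} (hn : 5 ≤ n) (P : HypPolyhedron n) (hfv : P.FiniteVolume)
    (hra : P.IsRightAngled) (hnc : ¬ P.IsCompactPoly) :
    2 ^ (n - 1) + 2 * n ≤ P.a (n - 1) + P.vInf ∧ 2 ^ (n - 1) + 2 * n ≤ nu n := by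
  refine ⟨HypPolyhedron.le_a_add_vInf hn hfv hra hnc, ?_⟩
  obtain ⟨Q, hfvQ, hraQ, hncQ, hQ⟩ := Nat.sInf_mem (s := nuSet n) ⟨_, P, hfv, hra, hnc, rfl⟩
  exact (HypPolyhedron.le_a_add_vInf hn hfvQ hraQ hncQ).trans_eq hQ

/-- For every finite-volume non-compact right-angled convex hyperbolic `5`-polyhedron,
`ν(P) = a₄(P) + v_∞(P) ≥ 26`; in particular `ν₅ ≥ 26`. -/
theorem nu_five (P : HypPolyhedron 5) (hfv : P.FiniteVolume) (hra : P.IsRightAngled)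
    (hnc : ¬ P.IsCompactPoly) :
    26 ≤ P.a 4 + P.vInf ∧ 26 ≤ nu 5 :=
  nu_five_general le_rfl P hfv hra hnc
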